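/- arXiv:math/0510191 — 6 statements merged into one kernel-verified Lean document; each statement's English description precedes it below -/
import Mathlib

section
/- Let H be a real Hilbert space and let Ψ : H → ℝ be Fréchet differentiable with gradient ∇Ψ : H → H Lipschitz with constant k, where 0 ≤ k < 2. Then the functional u ↦ ‖u‖² + Ψ(u) is strictly convex on H. -/
/-!
Along a segment `x + t • (y - x)`, a strictly monotone derivative restricts to a strictly increasing
one-variable derivative, so a function whose derivative is strictly monotone is strictly convex.
The derivative of `‖u‖ ^ 2 + Ψ u` is strictly monotone because the first term contributes
`2 * ‖u - v‖ ^ 2` to the pairing of the increment of the derivative with `u - v`, while by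
Cauchy–Schwarz the second contributes at least `-k * ‖u - v‖ ^ 2`.
-/

open AffineMap Set

theorem strictConvexOn_of_comp_lineMap {𝕜 E β : Type*} [Ring 𝕜] [PartialOrder 𝕜]
    [IsOrderedRing 𝕜] [AddCommGroup E] [Module 𝕜 E] [AddCommMonoid β] [PartialOrder β]
    [SMul 𝕜 β] {s : Set E} {f : E → β} (hs : Convex 𝕜 s)
    (hf : ∀ x ∈ s, ∀ y ∈ s, x ≠ y → StrictConvexOn 𝕜 (Icc 0 1) (f ∘ lineMap (k := 𝕜) x y)) :
    StrictConvexOn 𝕜 s f := by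
  refine ⟨hs, fun x hx y hy hxy a b ha hb hab => ?_⟩
  have : Nontrivial 𝕜 := ⟨a, 0, ha.ne'⟩
  have hpoint : lineMap x y b = a • x + b • y := by
    rw [lineMap_apply_module, eq_sub_of_add_eq hab]
  have hline := (hf x hx y hy hxy).2 (left_mem_Icc.2 zero_le_one) (right_mem_Icc.2 zero_le_one)
    zero_ne_one ha hb hab
  simpa [hpoint] using hline

theorem strictMonoOn_apply_lineMap_sub {𝕜 E : Type*} [Field 𝕜] [LinearOrder 𝕜]
    [IsStrictOrderedRing 𝕜] [AddCommGroup E] [Module 𝕜 E] {s : Set E} {F : E → Module.Dual 𝕜 E}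
    (hs : Convex 𝕜 s) (hF : ∀ u ∈ s, ∀ v ∈ s, u ≠ v → 0 < (F u - F v) (u - v))
    {x y : E} (hx : x ∈ s) (hy : y ∈ s) (hxy : x ≠ y) :
    StrictMonoOn (fun t : 𝕜 => F (lineMap x y t) (y - x)) (Icc 0 1) := by
  intro a ha b hb hab
  have hpos := hF _ (hs.lineMap_mem hx hy hb) _ (hs.lineMap_mem hx hy ha)
    ((lineMap_injective 𝕜 hxy).ne hab.ne')
  have hsub : lineMap x y b - lineMap x y a = (b - a) • (y - x) := by
    simp only [lineMap_apply_module]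
    module
  rw [hsub, map_smul, smul_eq_mul, LinearMap.sub_apply] at hpos
  exact sub_pos.1 (pos_of_mul_pos_right hpos (sub_pos.2 hab).le)

theorem strictConvexOn_of_hasFDerivWithinAt_of_sub_apply_sub_pos {E : Type*}
    [NormedAddCommGroup E] [NormedSpace ℝ E] {s : Set E} {f : E → ℝ} {f' : E → StrongDual ℝ E}
    (hs : Convex ℝ s) (hf : ∀ u ∈ s, HasFDerivWithinAt f (f' u) s u)
    (hf' : ∀ u ∈ s, ∀ v ∈ s, u ≠ v → 0 < (f' u - f' v) (u - v)) :
    StrictConvexOn ℝ s f := by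
  refine strictConvexOn_of_comp_lineMap hs fun x hx y hy hxy => ?_
  have hderiv : ∀ t ∈ Icc (0 : ℝ) 1, HasDerivWithinAt (f ∘ lineMap (k := ℝ) x y)
      (f' (lineMap x y t) (y - x)) (Icc 0 1) t := fun t ht =>
    (hf _ (hs.lineMap_mem hx hy ht)).comp_hasDerivWithinAt t hasDerivWithinAt_lineMap
      (hs.mapsTo_lineMap hx hy)
  have hmono : StrictMonoOn (fun t : ℝ => f' (lineMap x y t) (y - x)) (Icc 0 1) :=
    strictMonoOn_apply_lineMap_sub (F := fun u => (f' u).toLinearMap) hs hf' hx hy hxy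
  refine StrictMonoOn.strictConvexOn_of_deriv (convex_Icc 0 1)
    (fun t ht => (hderiv t ht).continuousWithinAt) ((hmono.mono interior_subset).congr ?_)
  exact fun t ht => ((hderiv t (interior_subset ht)).hasDerivAt
    (mem_interior_iff_mem_nhds.1 ht)).deriv.symm

theorem neg_mul_norm_sq_lt_apply {E : Type*} [NormedAddCommGroup E] [NormedSpace ℝ E]
    {L : StrongDual ℝ E} {x : E} {k c : ℝ} (hkc : k < c) (hx : x ≠ 0) (hL : ‖L‖ ≤ k * ‖x‖) :
    -(c * ‖x‖ ^ 2) < L x := by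
  refine neg_lt_of_abs_lt ?_
  calc |L x| ≤ ‖L‖ * ‖x‖ := L.le_opNorm x
    _ ≤ k * ‖x‖ * ‖x‖ := by gcongr
    _ = k * ‖x‖ ^ 2 := by ring
    _ < c * ‖x‖ ^ 2 := mul_lt_mul_of_pos_right hkc (pow_pos (norm_pos_iff.2 hx) 2)

theorem strictConvexOn_norm_sq_add_general {E : Type*} [NormedAddCommGroup E]
    [InnerProductSpace ℝ E] {s : Set E} {Ψ : E → ℝ} {Ψ' : E → StrongDual ℝ E} (hs : Convex ℝ s)
    (hΨ : ∀ u ∈ s, HasFDerivWithinAt Ψ (Ψ' u) s u)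
    (hΨ' : ∀ u ∈ s, ∀ v ∈ s, u ≠ v → -(2 * ‖u - v‖ ^ 2) < (Ψ' u - Ψ' v) (u - v)) :
    StrictConvexOn ℝ s (fun u : E => ‖u‖ ^ 2 + Ψ u) := by
  refine strictConvexOn_of_hasFDerivWithinAt_of_sub_apply_sub_pos hs
    (fun u hu => (hasStrictFDerivAt_norm_sq u).hasFDerivAt.hasFDerivWithinAt.add (hΨ u hu))
    fun u hu v hv huv => ?_
  have hincrement : (2 • innerSL ℝ u + Ψ' u - (2 • innerSL ℝ v + Ψ' v)) (u - v) =
      2 * ‖u - v‖ ^ 2 + (Ψ' u - Ψ' v) (u - v) := by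
    rw [← real_inner_self_eq_norm_sq, inner_sub_left]
    simp only [sub_apply, add_apply, smul_apply, innerSL_apply_apply, nsmul_eq_mul, Nat.cast_ofNat]
    ring
  rw [hincrement]
  exact neg_lt_iff_pos_add'.1 (hΨ' u hu v hv huv)

theorem strictConvexOn_norm_sq_add
    {H : Type*} [NormedAddCommGroup H] [InnerProductSpace ℝ H] [CompleteSpace H]
    (Ψ : H → ℝ) (Ψ' : H → H) (k : ℝ) (hk₀ : 0 ≤ k) (hk₂ : k < 2)
    (hgrad : ∀ u, HasGradientAt Ψ (Ψ' u) u)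
    (hlip : ∀ u v, ‖Ψ' u - Ψ' v‖ ≤ k * ‖u - v‖) :
    StrictConvexOn ℝ Set.univ (fun u : H => ‖u‖ ^ 2 + Ψ u) :=
  strictConvexOn_norm_sq_add_general convex_univ
    (fun u _ => (hgrad u).hasFDerivAt.hasFDerivWithinAt)
    fun u _ v _ huv => neg_mul_norm_sq_lt_apply hk₂ (sub_ne_zero.2 huv)
      (by simpa only [← map_sub, LinearIsometryEquiv.norm_map] using hlip u v)
end

section
/- Let H be a real Hilbert space and let Ψ : H → ℝ be Fréchet differentiable with gradient ∇Ψ : H → H Lipschitz with constant k, where 0 ≤ k < 2. Then the functional u ↦ ‖u‖² + Ψ(u) is coercive: it tends to +∞ as ‖u‖ → +∞. -/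
/-!
At the point `x + t • (y - x)`, the derivative of `f` in the direction `y - x` has dropped by at
most `t * k * ‖y - x‖ ^ 2` from its value at `x`; for a `k`-Lipschitz derivative this is the
operator norm bound. Integrating over `t` gives `f y ≥ f x + f' x (y - x) - k / 2 * ‖y - x‖ ^ 2`.
With `x = 0`, the sum `‖u‖ ^ 2 + f u` is bounded below by a quadratic in `‖u‖` whose leading
coefficient `1 - k / 2` is positive.
-/

open Bornology Filter Set

theorem add_mul_sub_sq_le_of_hasDerivWithinAt {g g' : ℝ → ℝ} {a b m c : ℝ} (hab : a ≤ b)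
    (hg : ∀ t ∈ Icc a b, HasDerivWithinAt g (g' t) (Icc a b) t)
    (hg' : ∀ t ∈ Ico a b, m - c * (t - a) ≤ g' t) :
    g a + m * (b - a) - c / 2 * (b - a) ^ 2 ≤ g b := by
  let q : ℝ → ℝ := fun t ↦ g a + m * (t - a) - c / 2 * (t - a) ^ 2
  have hq (t : ℝ) : HasDerivAt q (m - c * (t - a)) t := by
    have hsub := (hasDerivAt_id t).sub_const a
    exact (((hsub.const_mul m).const_add (g a)).sub ((hsub.pow 2).const_mul (c / 2))).congr_deriv
      (by simp only [id]; push_cast; ring)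
  have hq_le : ∀ ⦃t⦄, t ∈ Icc a b → q t ≤ g t := image_le_of_deriv_right_le_deriv_boundary
    (fun t _ ↦ (hq t).continuousAt.continuousWithinAt)
    (fun t _ ↦ (hq t).hasDerivWithinAt) (by simp [q])
    (fun t ht ↦ (hg t ht).continuousWithinAt)
    (fun t ht ↦ (hg t (Ico_subset_Icc_self ht)).mono_of_mem_nhdsWithin
      (Icc_mem_nhdsGE_of_mem ht)) hg'
  exact hq_le (right_mem_Icc.mpr hab)

theorem tendsto_const_mul_sq_sub_const_mul_atTop {𝕜 : Type*} [Field 𝕜] [LinearOrder 𝕜]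
    [IsStrictOrderedRing 𝕜] {a : 𝕜} (ha : 0 < a) (b : 𝕜) :
    Tendsto (fun r : 𝕜 ↦ a * r ^ 2 - b * r) atTop atTop := by
  have hlin : Tendsto (fun r : 𝕜 ↦ a * r + -b) atTop atTop :=
    tendsto_atTop_add_const_right _ (-b) (tendsto_id.const_mul_atTop ha)
  refine (tendsto_id.atTop_mul_atTop₀ hlin).congr fun r ↦ ?_
  simp only [id]
  ring

theorem neg_mul_norm_sq_le_apply_of_norm_le {E : Type*} [SeminormedAddCommGroup E]
    [NormedSpace ℝ E] {L : E →L[ℝ] ℝ} {v : E} {k : ℝ} (hL : ‖L‖ ≤ k * ‖v‖) :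
    -(k * ‖v‖ ^ 2) ≤ L v := by
  have hLv : |L v| ≤ k * ‖v‖ * ‖v‖ := L.le_of_opNorm_le hL v
  linarith [neg_le_of_abs_le hLv]

section NormedSpace

variable {E : Type*} [NormedAddCommGroup E] [NormedSpace ℝ E]
  {f : E → ℝ} {f' : E → E →L[ℝ] ℝ} {k : ℝ}

theorem add_apply_sub_norm_sq_le_of_hasFDerivWithinAt_segment {x y : E}
    (hf : ∀ z ∈ segment ℝ x y, HasFDerivWithinAt f (f' z) (segment ℝ x y) z)
    (hf' : ∀ z ∈ segment ℝ x y, -(k * ‖z - x‖ ^ 2) ≤ (f' z - f' x) (z - x)) :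
    f x + f' x (y - x) - k / 2 * ‖y - x‖ ^ 2 ≤ f y := by
  let γ : ℝ → E := AffineMap.lineMap x y
  have hγ_mem : MapsTo γ (Icc 0 1) (segment ℝ x y) := fun _ ↦ lineMap_mem_segment ℝ x y
  have hγ_sub (t : ℝ) : γ t - x = t • (y - x) := AffineMap.lineMap_vsub_left x y t
  have hfγ : ∀ t ∈ Icc (0 : ℝ) 1,
      HasDerivWithinAt (f ∘ γ) (f' (γ t) (y - x)) (Icc 0 1) t := fun t ht ↦
    (hf _ (hγ_mem ht)).comp_hasDerivWithinAt t
      AffineMap.hasDerivAt_lineMap.hasDerivWithinAt hγ_mem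
  have hderiv_ge : ∀ t ∈ Ico (0 : ℝ) 1,
      f' x (y - x) - k * ‖y - x‖ ^ 2 * (t - 0) ≤ f' (γ t) (y - x) := fun t ht ↦ by
    rcases ht.1.eq_or_lt with rfl | ht_pos
    · simp [γ]
    · have hdir := hf' _ (hγ_mem (Ico_subset_Icc_self ht))
      simp only [hγ_sub, norm_smul, map_smul, sub_apply, smul_eq_mul, mul_pow,
        Real.norm_eq_abs, sq_abs] at hdir
      refine le_of_mul_le_mul_left ?_ ht_pos
      linarith
  have hle := add_mul_sub_sq_le_of_hasDerivWithinAt zero_le_one hfγ hderiv_ge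
  simp only [Function.comp_apply, γ, AffineMap.lineMap_apply_zero,
    AffineMap.lineMap_apply_one] at hle
  linarith

theorem coercive_norm_sq_add_general (hk : k < 2) (hf : ∀ u, HasFDerivAt f (f' u) u)
    (hf' : ∀ u, -(k * ‖u‖ ^ 2) ≤ (f' u - f' 0) u) :
    Tendsto (fun u ↦ ‖u‖ ^ 2 + f u) (cobounded E) atTop := by
  have hlower (u : E) :
      f 0 + ((1 - k / 2) * ‖u‖ ^ 2 - ‖f' 0‖ * ‖u‖) ≤ ‖u‖ ^ 2 + f u := by
    have hquad : f 0 + f' 0 u - k / 2 * ‖u‖ ^ 2 ≤ f u := by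
      simpa using add_apply_sub_norm_sq_le_of_hasFDerivWithinAt_segment (x := 0) (y := u)
        (fun z _ ↦ (hf z).hasFDerivWithinAt) (fun z _ ↦ by simpa using hf' z)
    linarith [neg_le_of_abs_le ((f' 0).le_opNorm u)]
  refine tendsto_atTop_mono hlower (tendsto_atTop_add_const_left _ _ ?_)
  exact (tendsto_const_mul_sq_sub_const_mul_atTop (by linarith) _).comp
    tendsto_norm_cobounded_atTop

end NormedSpace

theorem coercive_norm_sq_add
    {H : Type*} [NormedAddCommGroup H] [InnerProductSpace ℝ H] [CompleteSpace H]
    (Ψ : H → ℝ) (Ψ' : H → H) (k : ℝ) (hk₀ : 0 ≤ k) (hk₂ : k < 2)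
    (hgrad : ∀ u, HasGradientAt Ψ (Ψ' u) u)
    (hlip : ∀ u v, ‖Ψ' u - Ψ' v‖ ≤ k * ‖u - v‖) :
    ∀ M : ℝ, ∃ R : ℝ, ∀ u : H, R ≤ ‖u‖ → M ≤ ‖u‖ ^ 2 + Ψ u := by
  have hcoercive := coercive_norm_sq_add_general hk₂ (fun u ↦ (hgrad u).hasFDerivAt) fun u ↦
    neg_mul_norm_sq_le_apply_of_norm_le (by simpa [← map_sub] using hlip u 0)
  simpa using (hasBasis_cobounded_norm.tendsto_iff atTop_basis).mp hcoercive
end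

section
/- Let H be a real Hilbert space, V a closed linear subspace of H, and I, J : H → ℝ Fréchet differentiable functionals whose gradients ∇I and ∇J are Lipschitz with constants ν and L respectively, where 0 ≤ ν < 2 and L > 0. Assume I(u) ≥ 0 for all u ∈ H and I(0) = 0. Let S be the set of global minima over V of the functional u ↦ ‖u‖² + I(u) + ((2 − ν)/L) J(u). Then S is a closed convex subset of H, and if S is nonempty there exists a unique û ∈ S such that ‖û‖² + I(û) = inf_{u ∈ S} (‖u‖² + I(u)). -/
/-!
Restricting a functional with `k`-Lipschitz gradient to a segment and adding a multiple of `t ^ 2`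
makes its derivative monotone, so the functional is strongly convex with modulus `-k`. Since
`‖·‖ ^ 2` has modulus exactly `2`, the functional `‖·‖ ^ 2 + I` has modulus `2 - ν > 0`, and this is
just enough to absorb the modulus `-(2 - ν)` of `((2 - ν) / L) * J`. Hence `S` is the set of
minimizers of a continuous convex functional, and `‖·‖ ^ 2 + I` is strongly convex on it. A strongly
convex function is bounded below, and its sublevel sets near the infimum shrink to a point.
-/

open Set Filter Topology

section Minimizers

theorem convex_setOf_mem_isMinOn {𝕜 E β : Type*} [Semiring 𝕜] [PartialOrder 𝕜] [AddCommMonoid E]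
    [AddCommMonoid β] [PartialOrder β] [IsOrderedAddMonoid β] [SMul 𝕜 E] [Module 𝕜 β]
    [PosSMulMono 𝕜 β] {s : Set E} {f : E → β} (hf : ConvexOn 𝕜 s f) :
    Convex 𝕜 {x ∈ s | IsMinOn f s x} := fun _ hx _ hy _ _ ha hb hab ↦
  ⟨hf.1 hx.1 hy.1 ha hb hab, fun z hz ↦
    (hf.convex_le (f z) ⟨hx.1, hx.2 hz⟩ ⟨hy.1, hy.2 hz⟩ ha hb hab).2⟩

variable {X γ : Type*} [TopologicalSpace X] [LinearOrder γ] [TopologicalSpace γ]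
  [ClosedIciTopology γ] {s : Set X} {f : X → γ}

theorem isClosed_setOf_mem_le (hs : IsClosed s) (hf : LowerSemicontinuousOn f s) (c : γ) :
    IsClosed {x ∈ s | f x ≤ c} :=
  ((lowerSemicontinuousOn_iff_isClosed_epigraph hs).1 hf).preimage
    (continuous_id.prodMk continuous_const)

theorem isClosed_setOf_mem_isMinOn (hs : IsClosed s) (hf : LowerSemicontinuousOn f s) :
    IsClosed {x ∈ s | IsMinOn f s x} := by
  have hinter : {x ∈ s | IsMinOn f s x} = s ∩ ⋂ y ∈ s, {x ∈ s | f x ≤ f y} := by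
    ext x
    simp +contextual [isMinOn_iff]
  rw [hinter]
  exact hs.inter (isClosed_biInter fun y _ ↦ isClosed_setOf_mem_le hs hf (f y))

end Minimizers

section StrongConvexity

variable {E : Type*} [NormedAddCommGroup E] [NormedSpace ℝ E] {s : Set E} {f g : E → ℝ} {m n : ℝ}

theorem strongConvexOn_add (hf : StrongConvexOn s m f) (hg : StrongConvexOn s n g) :
    StrongConvexOn s (m + n) fun x ↦ f x + g x := by
  refine ⟨hf.1, fun x hx y hy a b ha hb hab ↦ ?_⟩
  have hfg := add_le_add (hf.2 hx hy ha hb hab) (hg.2 hx hy ha hb hab)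
  simp only [smul_eq_mul] at hfg ⊢
  linarith

theorem strongConvexOn_const_mul {c : ℝ} (hc : 0 ≤ c) (hf : StrongConvexOn s m f) :
    StrongConvexOn s (c * m) fun x ↦ c * f x := by
  refine ⟨hf.1, fun x hx y hy a b ha hb hab ↦ ?_⟩
  have hcf := mul_le_mul_of_nonneg_left (hf.2 hx hy ha hb hab) hc
  simp only [smul_eq_mul] at hcf ⊢
  linarith

theorem strongConvexOn_subset {t : Set E} (hf : StrongConvexOn t m f) (hst : s ⊆ t)
    (hs : Convex ℝ s) : StrongConvexOn s m f :=
  ⟨hs, fun _ hx _ hy ↦ hf.2 (hst hx) (hst hy)⟩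

theorem strongConvexOn_of_hasDerivWithinAt_stronglyMonotone {D : Set ℝ} {φ φ' : ℝ → ℝ}
    (hD : Convex ℝ D) (hφ : ∀ t ∈ D, HasDerivWithinAt φ (φ' t) D t)
    (hmono : ∀ t ∈ D, ∀ r ∈ D, t < r → m * (r - t) ≤ φ' r - φ' t) : StrongConvexOn D m φ := by
  refine strongConvexOn_iff_convex.2 ?_
  have hψ (t : ℝ) (ht : t ∈ D) :
      HasDerivWithinAt (fun t ↦ φ t - m / 2 * ‖t‖ ^ 2) (φ' t - m * t) D t := by
    have hsq := ((hasDerivAt_id t).pow 2).const_mul (m / 2)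
    simp only [Real.norm_eq_abs, sq_abs]
    refine ((hφ t ht).sub hsq.hasDerivWithinAt).congr_deriv ?_
    simp only [id_eq, Nat.cast_ofNat, Nat.add_one_sub_one, pow_one, mul_one]
    ring
  have hψ_deriv {t : ℝ} (ht : t ∈ interior D) :
      HasDerivAt (fun t ↦ φ t - m / 2 * ‖t‖ ^ 2) (φ' t - m * t) t :=
    (hψ t (interior_subset ht)).hasDerivAt (mem_interior_iff_mem_nhds.1 ht)
  refine MonotoneOn.convexOn_of_deriv hD (fun t ht ↦ (hψ t ht).continuousWithinAt)
    (fun t ht ↦ (hψ_deriv ht).differentiableAt.differentiableWithinAt) fun t ht r hr htr ↦ ?_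
  rw [(hψ_deriv ht).deriv, (hψ_deriv hr).deriv]
  obtain rfl | hlt := htr.eq_or_lt
  · rfl
  · linarith [hmono t (interior_subset ht) r (interior_subset hr) hlt]

theorem strongConvexOn_of_hasFDerivWithinAt_stronglyMonotone {f' : E → E →L[ℝ] ℝ} (hs : Convex ℝ s)
    (hf : ∀ x ∈ s, HasFDerivWithinAt f (f' x) s x)
    (hmono : ∀ x ∈ s, ∀ y ∈ s, m * ‖x - y‖ ^ 2 ≤ (f' x - f' y) (x - y)) :
    StrongConvexOn s m f := by
  refine ⟨hs, fun x hx y hy a b ha hb hab ↦ ?_⟩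
  let γ : ℝ →ᵃ[ℝ] E := AffineMap.lineMap x y
  have hγs : MapsTo γ (Icc 0 1) s := hs.mapsTo_lineMap hx hy
  have hderiv (t : ℝ) (ht : t ∈ Icc (0 : ℝ) 1) :
      HasDerivWithinAt (f ∘ γ) (f' (γ t) (y - x)) (Icc 0 1) t :=
    (hf _ (hγs ht)).comp_hasDerivWithinAt t AffineMap.hasDerivWithinAt_lineMap hγs
  have hderiv_mono (t : ℝ) (ht : t ∈ Icc (0 : ℝ) 1) (r : ℝ) (hr : r ∈ Icc (0 : ℝ) 1)
      (htr : t < r) :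
      m * ‖y - x‖ ^ 2 * (r - t) ≤ f' (γ r) (y - x) - f' (γ t) (y - x) := by
    have hγ_sub : γ r - γ t = (r - t) • (y - x) := by
      simp only [γ, AffineMap.lineMap_apply_module']
      module
    have hrt := hmono _ (hγs hr) _ (hγs ht)
    rw [hγ_sub, norm_smul, mul_pow, Real.norm_eq_abs, sq_abs, map_smul, smul_eq_mul,
      sub_apply] at hrt
    exact le_of_mul_le_mul_left (by linarith) (sub_pos.2 htr)
  have hsegment :=
    (strongConvexOn_of_hasDerivWithinAt_stronglyMonotone (convex_Icc 0 1) hderiv hderiv_mono).2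
      (left_mem_Icc.2 zero_le_one) (right_mem_Icc.2 zero_le_one) ha hb hab
  have hγ_ab : γ b = a • x + b • y := by
    simp only [γ, AffineMap.lineMap_apply_module, ← hab, add_sub_cancel_right]
  simp only [smul_eq_mul, mul_zero, mul_one, zero_add, Function.comp_apply, hγ_ab, zero_sub,
    norm_neg, norm_one, one_pow] at hsegment ⊢
  simpa only [γ, AffineMap.lineMap_apply_zero, AffineMap.lineMap_apply_one, norm_sub_rev x y,
    div_mul_eq_mul_div] using hsegment

theorem strongConvexOn_neg_of_hasFDerivWithinAt_lipschitz {f' : E → E →L[ℝ] ℝ} {k : ℝ}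
    (hs : Convex ℝ s) (hf : ∀ x ∈ s, HasFDerivWithinAt f (f' x) s x)
    (hlip : ∀ x ∈ s, ∀ y ∈ s, ‖f' x - f' y‖ ≤ k * ‖x - y‖) :
    StrongConvexOn s (-k) f := by
  refine strongConvexOn_of_hasFDerivWithinAt_stronglyMonotone hs hf fun x hx y hy ↦ ?_
  have habs : |(f' x - f' y) (x - y)| ≤ k * ‖x - y‖ ^ 2 := calc
    |(f' x - f' y) (x - y)| ≤ ‖f' x - f' y‖ * ‖x - y‖ := (f' x - f' y).le_opNorm (x - y)
    _ ≤ k * ‖x - y‖ * ‖x - y‖ := by gcongr; exact hlip x hx y hy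
    _ = k * ‖x - y‖ ^ 2 := by ring
  linarith [neg_le_of_abs_le habs]

theorem quadratic_growth_of_strongConvexOn {r δ : ℝ} {x₀ x : E} (hf : StrongConvexOn s m f)
    (hm : 0 ≤ m) (hr : 0 < r) (hx₀ : x₀ ∈ s)
    (hlow : ∀ y ∈ s ∩ Metric.ball x₀ r, f x₀ - δ < f y) (hx : x ∈ s) (hfar : r ≤ ‖x - x₀‖) :
    m / 4 * ‖x - x₀‖ ^ 2 - 2 * δ / r * ‖x - x₀‖ < f x - f x₀ := by
  set d := ‖x - x₀‖
  have hd : 0 < d := hr.trans_le hfar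
  -- This `t` puts `t • x + (1 - t) • x₀` at distance `r / 2` from `x₀`.
  set t := r / (2 * d) with ht
  have ht₀ : 0 < t := by positivity
  have ht₁ : t ≤ 1 / 2 := by
    rw [ht, div_le_iff₀ (by positivity)]
    linarith
  have hconv := hf.2 hx hx₀ ht₀.le (by linarith : 0 ≤ 1 - t) (by ring)
  have hmem := hf.1 hx hx₀ ht₀.le (by linarith : 0 ≤ 1 - t) (by ring)
  have hball : t • x + (1 - t) • x₀ ∈ Metric.ball x₀ r := by
    have hsub : t • x + (1 - t) • x₀ - x₀ = t • (x - x₀) := by module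
    rw [mem_ball_iff_norm, hsub, norm_smul, Real.norm_of_nonneg ht₀.le]
    calc t * d = r / 2 := by rw [ht]; field_simp
      _ < r := half_lt_self hr
  have hbetween := hlow _ ⟨hmem, hball⟩
  have hmodulus : t * (m / 4 * d ^ 2) ≤ t * (1 - t) * (m / 2 * d ^ 2) := calc
    t * (m / 4 * d ^ 2) = t * (1 / 2) * (m / 2 * d ^ 2) := by ring
    _ ≤ t * (1 - t) * (m / 2 * d ^ 2) := by gcongr; linarith
  have hlinear : t * (2 * δ / r * d) = δ := by rw [ht]; field_simp
  refine lt_of_mul_lt_mul_left ?_ ht₀.le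
  simp only [smul_eq_mul] at hconv
  linarith

theorem bddBelow_image_of_strongConvexOn {x₀ : E} (hf : StrongConvexOn s m f) (hm : 0 < m)
    (hx₀ : x₀ ∈ s) (hsc : LowerSemicontinuousWithinAt f s x₀) : BddBelow (f '' s) := by
  obtain ⟨r, hr, hball⟩ := Metric.mem_nhdsWithin_iff.1 (hsc (f x₀ - 1) (sub_one_lt _))
  have hlow (y : E) (hy : y ∈ s ∩ Metric.ball x₀ r) : f x₀ - 1 < f y := hball ⟨hy.2, hy.1⟩
  refine ⟨f x₀ - 1 - 4 / (m * r ^ 2), forall_mem_image.2 fun x hx ↦ ?_⟩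
  obtain hnear | hfar := lt_or_ge ‖x - x₀‖ r
  · have hquot : 0 ≤ 4 / (m * r ^ 2) := by positivity
    linarith [hlow x ⟨hx, mem_ball_iff_norm.2 hnear⟩]
  · have hgrowth := quadratic_growth_of_strongConvexOn hf hm.le hr hx₀ hlow hx hfar
    have hsquare : 0 ≤ m / 4 * ‖x - x₀‖ ^ 2 - 2 * 1 / r * ‖x - x₀‖ + 4 / (m * r ^ 2) := calc
      0 ≤ m * (‖x - x₀‖ / 2 - 2 / (m * r)) ^ 2 := by positivity
      _ = m / 4 * ‖x - x₀‖ ^ 2 - 2 * 1 / r * ‖x - x₀‖ + 4 / (m * r ^ 2) := by field_simp; ring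
    linarith

theorem norm_sub_sq_le_of_strongConvexOn {i ε : ℝ} (hf : StrongConvexOn s m f) (hm : 0 < m)
    (hi : i ∈ lowerBounds (f '' s)) {x y : E} (hx : x ∈ s) (hy : y ∈ s) (hxε : f x ≤ i + ε)
    (hyε : f y ≤ i + ε) : ‖x - y‖ ^ 2 ≤ 8 / m * ε := by
  have hhalf : (0 : ℝ) ≤ 1 / 2 := by norm_num
  have hhalves : (1 / 2 : ℝ) + 1 / 2 = 1 := by norm_num
  have hmid := hf.2 hx hy hhalf hhalf hhalves
  have hlow := hi (mem_image_of_mem f (hf.1 hx hy hhalf hhalf hhalves))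
  simp only [smul_eq_mul] at hmid
  rw [div_mul_eq_mul_div, le_div_iff₀ hm]
  linarith

theorem exists_isMinOn_of_strongConvexOn [CompleteSpace E] (hf : StrongConvexOn s m f)
    (hm : 0 < m) (hsc : LowerSemicontinuousOn f s) (hs : IsClosed s) (hne : s.Nonempty) :
    ∃ x ∈ s, IsMinOn f s x := by
  obtain ⟨x₀, hx₀⟩ := hne
  have hbdd := bddBelow_image_of_strongConvexOn hf hm hx₀ (hsc x₀ hx₀)
  set i := sInf (f '' s)
  have hi : i ∈ lowerBounds (f '' s) := fun _ ↦ csInf_le hbdd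
  let ε : ℕ → ℝ := fun n ↦ 1 / ((n : ℝ) + 1)
  have hε : Antitone ε := fun _ _ h ↦ Nat.one_div_le_one_div h
  have hε_lim : Tendsto ε atTop (𝓝 0) := tendsto_one_div_add_atTop_nhds_zero_nat
  let A : ℕ → Set E := fun n ↦ {x ∈ s | f x ≤ i + ε n}
  have hA_dist (n : ℕ) : ∀ x ∈ A n, ∀ y ∈ A n, dist x y ≤ √(8 / m * ε n) := fun x hx y hy ↦ by
    rw [dist_eq_norm]
    exact Real.le_sqrt_of_sq_le
      (norm_sub_sq_le_of_strongConvexOn hf hm hi hx.1 hy.1 hx.2 hy.2)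
  have hA_diam : Tendsto (fun n ↦ Metric.diam (A n)) atTop (𝓝 0) := by
    refine squeeze_zero (fun _ ↦ Metric.diam_nonneg)
      (fun n ↦ Metric.diam_le_of_forall_dist_le (Real.sqrt_nonneg _) (hA_dist n)) ?_
    simpa using (hε_lim.const_mul (8 / m)).sqrt
  have hA_nonempty (n : ℕ) : (⋂ k ≤ n, A k).Nonempty := by
    obtain ⟨_, ⟨x, hx, rfl⟩, hlt⟩ := exists_lt_of_csInf_lt ⟨_, mem_image_of_mem f hx₀⟩
      (lt_add_of_pos_right i (Nat.one_div_pos_of_nat : 0 < ε n))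
    exact ⟨x, mem_iInter₂.2 fun k hk ↦ ⟨hx, hlt.le.trans (by gcongr; exact hε hk)⟩⟩
  obtain ⟨x, hx⟩ := Metric.nonempty_iInter_of_nonempty_biInter
    (fun n ↦ isClosed_setOf_mem_le hs hsc (i + ε n))
    (fun n ↦ Metric.isBounded_iff.2 ⟨_, hA_dist n⟩) hA_nonempty hA_diam
  rw [mem_iInter] at hx
  have hfx : f x ≤ i := ge_of_tendsto' (by simpa using hε_lim.const_add i) fun n ↦ (hx n).2
  exact ⟨x, (hx 0).1, fun y hy ↦ hfx.trans (hi (mem_image_of_mem f hy))⟩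

theorem existsUnique_eq_sInf_image_of_strongConvexOn [CompleteSpace E] (hf : StrongConvexOn s m f)
    (hm : 0 < m) (hsc : LowerSemicontinuousOn f s) (hs : IsClosed s) (hne : s.Nonempty) :
    ∃! x, x ∈ s ∧ f x = sInf (f '' s) := by
  obtain ⟨x, hx, hmin⟩ := exists_isMinOn_of_strongConvexOn hf hm hsc hs hne
  have hleast : IsLeast (f '' s) (f x) :=
    ⟨mem_image_of_mem f hx, forall_mem_image.2 fun _ hy ↦ hmin hy⟩
  rw [hleast.csInf_eq]
  refine ⟨x, ⟨hx, rfl⟩, fun y ⟨hy, hyx⟩ ↦ ?_⟩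
  have hmin_y : IsMinOn f s y := fun z hz ↦ hyx.trans_le (hmin hz)
  exact (hf.strictConvexOn hm).eq_of_isMinOn hmin_y hmin hy hx

end StrongConvexity

section Gradient

variable {H : Type*} [NormedAddCommGroup H] [InnerProductSpace ℝ H]

theorem strongConvexOn_norm_sq {s : Set H} (hs : Convex ℝ s) :
    StrongConvexOn s 2 fun u ↦ ‖u‖ ^ 2 := by
  simpa [strongConvexOn_iff_convex] using convexOn_const (0 : ℝ) hs

theorem strongConvexOn_neg_of_hasGradientWithinAt_lipschitz [CompleteSpace H] {s : Set H}
    {f : H → ℝ} {f' : H → H} {k : ℝ} (hs : Convex ℝ s)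
    (hf : ∀ u ∈ s, HasGradientWithinAt f (f' u) s u)
    (hlip : ∀ u ∈ s, ∀ v ∈ s, ‖f' u - f' v‖ ≤ k * ‖u - v‖) : StrongConvexOn s (-k) f := by
  refine strongConvexOn_neg_of_hasFDerivWithinAt_lipschitz hs
    (fun u hu ↦ (hf u hu).hasFDerivWithinAt) fun u hu v hv ↦ ?_
  rw [← map_sub, LinearIsometryEquiv.norm_map]
  exact hlip u hu v hv

end Gradient

theorem minima_set_closed_convex_and_unique_nearest_general
    {H : Type*} [NormedAddCommGroup H] [InnerProductSpace ℝ H] [CompleteSpace H]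
    {V : Set H} (hVconv : Convex ℝ V) (hVclosed : IsClosed V)
    {I J : H → ℝ} {I' J' : H → H} {ν L c : ℝ} (hν : ν < 2) (hc : 0 ≤ c) (hcL : c * L ≤ 2 - ν)
    (hIgrad : ∀ u ∈ V, HasGradientWithinAt I (I' u) V u)
    (hJgrad : ∀ u ∈ V, HasGradientWithinAt J (J' u) V u)
    (hIlip : ∀ u ∈ V, ∀ v ∈ V, ‖I' u - I' v‖ ≤ ν * ‖u - v‖)
    (hJlip : ∀ u ∈ V, ∀ v ∈ V, ‖J' u - J' v‖ ≤ L * ‖u - v‖)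
    {S : Set H}
    (hS : S = {u | u ∈ V ∧ ∀ v ∈ V, ‖u‖ ^ 2 + I u + c * J u ≤ ‖v‖ ^ 2 + I v + c * J v}) :
    Convex ℝ S ∧ IsClosed S ∧
      (S.Nonempty → ∃! uhat, uhat ∈ S ∧
        ‖uhat‖ ^ 2 + I uhat = sInf ((fun u : H ↦ ‖u‖ ^ 2 + I u) '' S)) := by
  have hIcont : ContinuousOn I V := fun u hu ↦ (hIgrad u hu).continuousWithinAt
  have hJcont : ContinuousOn J V := fun u hu ↦ (hJgrad u hu).continuousWithinAt
  have hGcont : ContinuousOn (fun u ↦ ‖u‖ ^ 2 + I u) V := by fun_prop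
  have hFcont : ContinuousOn (fun u ↦ ‖u‖ ^ 2 + I u + c * J u) V := by fun_prop
  have hG : StrongConvexOn V (2 + -ν) fun u ↦ ‖u‖ ^ 2 + I u :=
    strongConvexOn_add (strongConvexOn_norm_sq hVconv)
      (strongConvexOn_neg_of_hasGradientWithinAt_lipschitz hVconv hIgrad hIlip)
  have hcJ : StrongConvexOn V (c * -L) fun u ↦ c * J u :=
    strongConvexOn_const_mul hc
      (strongConvexOn_neg_of_hasGradientWithinAt_lipschitz hVconv hJgrad hJlip)
  have hF : ConvexOn ℝ V fun u ↦ ‖u‖ ^ 2 + I u + c * J u :=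
    strongConvexOn_zero.1 ((strongConvexOn_add hG hcJ).mono (by linarith))
  have hSmin : S = {u ∈ V | IsMinOn (fun u ↦ ‖u‖ ^ 2 + I u + c * J u) V u} := hS
  have hSV : S ⊆ V := hSmin ▸ sep_subset _ _
  have hSconv : Convex ℝ S := hSmin ▸ convex_setOf_mem_isMinOn hF
  have hSclosed : IsClosed S :=
    hSmin ▸ isClosed_setOf_mem_isMinOn hVclosed hFcont.lowerSemicontinuousOn
  exact ⟨hSconv, hSclosed, existsUnique_eq_sInf_image_of_strongConvexOn
    (strongConvexOn_subset hG hSV hSconv) (by linarith)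
    (hGcont.mono hSV).lowerSemicontinuousOn hSclosed⟩

theorem minima_set_closed_convex_and_unique_nearest
    {H : Type*} [NormedAddCommGroup H] [InnerProductSpace ℝ H] [CompleteSpace H]
    (V : Submodule ℝ H) (hV : IsClosed (V : Set H))
    (I J : H → ℝ) (I' J' : H → H) (ν L : ℝ)
    (hν₀ : 0 ≤ ν) (hν₂ : ν < 2) (hL : 0 < L)
    (hIgrad : ∀ u, HasGradientAt I (I' u) u)
    (hJgrad : ∀ u, HasGradientAt J (J' u) u)
    (hIlip : ∀ u v, ‖I' u - I' v‖ ≤ ν * ‖u - v‖)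
    (hJlip : ∀ u v, ‖J' u - J' v‖ ≤ L * ‖u - v‖)
    (hInonneg : ∀ u, 0 ≤ I u) (hI0 : I 0 = 0)
    (S : Set H)
    (hS : S = {u : H | u ∈ V ∧ ∀ v ∈ V,
      ‖u‖ ^ 2 + I u + ((2 - ν) / L) * J u ≤ ‖v‖ ^ 2 + I v + ((2 - ν) / L) * J v}) :
    Convex ℝ S ∧ IsClosed S ∧
      (S.Nonempty → ∃! uhat, uhat ∈ S ∧
        ‖uhat‖ ^ 2 + I uhat = sInf ((fun u : H => ‖u‖ ^ 2 + I u) '' S)) :=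
  minima_set_closed_convex_and_unique_nearest_general V.convex hV hν₂
    (div_nonneg (sub_nonneg.2 hν₂.le) hL.le) (div_mul_cancel₀ _ hL.ne').le
    (fun u _ ↦ (hIgrad u).hasFDerivAt.hasFDerivWithinAt)
    (fun u _ ↦ (hJgrad u).hasFDerivAt.hasFDerivWithinAt)
    (fun u _ v _ ↦ hIlip u v) (fun u _ v _ ↦ hJlip u v) hS
end

section
/- Let H be a real Hilbert space, V a closed linear subspace of H, and I, J : H → ℝ Fréchet differentiable functionals whose gradients ∇I and ∇J are Lipschitz with constants ν and L respectively, where 0 ≤ ν < 2 and L > 0. Assume I(u) ≥ 0 for all u ∈ H, I(0) = 0, and there exists v₀ ∈ V with ⟨∇J(0), v₀⟩ ≠ 0. Let S be the set of global minima over V of the functional u ↦ ‖u‖² + I(u) + ((2 − ν)/L) J(u). Then δ := inf_{u ∈ S} (‖u‖² + I(u)) > 0, with the convention that the infimum over the empty set is +∞. -/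
open scoped RealInnerProductSpace

/-!
Since `I` attains its minimum at `0`, the derivative at `0` of `‖u‖² + I u + c J u` is `c J'(0)`,
and it does not vanish on `V`. A descent direction at `0` in `V` is, by strict differentiability,
a descent direction at every point close to `0`, so the minimizers over `V` stay away from `0`, and
`‖u‖² + I u ≥ ‖u‖²` is bounded below on them by a positive constant.
-/

open Filter Topology Asymptotics

section NormedSpace

variable {E : Type*} [NormedAddCommGroup E] [NormedSpace ℝ E]

theorem eventually_nhds_eventually_add_smul_lt {F : E → ℝ} {F' : E →L[ℝ] ℝ} {x w : E}
    (hF : HasStrictFDerivAt F F' x) (hw : F' w < 0) :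
    ∀ᶠ u in 𝓝 x, ∀ᶠ t in 𝓝[>] (0 : ℝ), F (u + t • w) < F u := by
  have hw₀ : 0 < ‖w‖ := norm_pos_iff.mpr fun h => by simp [h] at hw
  have hε : 0 < -F' w / (2 * ‖w‖) := div_pos (neg_pos.mpr hw) (by positivity)
  have htendsto : Tendsto (fun q : E × ℝ => (q.1 + q.2 • w, q.1)) (𝓝 (x, 0)) (𝓝 (x, x)) :=
    Continuous.tendsto' (by fun_prop) _ _ (by simp)
  have hremainder := (htendsto.eventually (hF.isLittleO.def hε)).curry_nhds
  filter_upwards [hremainder] with u hu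
  filter_upwards [nhdsWithin_le_nhds hu, self_mem_nhdsWithin] with t hut (ht : 0 < t)
  have hlinear : F (u + t • w) - F u - t * F' w ≤ t * (-F' w / 2) :=
    calc F (u + t • w) - F u - t * F' w ≤ ‖F (u + t • w) - F u - F' (u + t • w - u)‖ := by
          simpa using le_abs_self (F (u + t • w) - F u - t * F' w)
      _ ≤ -F' w / (2 * ‖w‖) * ‖u + t • w - u‖ := hut
      _ = t * (-F' w / 2) := by
          rw [add_sub_cancel_left, norm_smul, Real.norm_of_nonneg ht.le]
          field_simp
  linarith [mul_neg_of_pos_of_neg ht hw]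

theorem eventually_not_isLocalMinOn_submodule {V : Submodule ℝ E} {F : E → ℝ} {F' : E →L[ℝ] ℝ}
    {x v : E} (hF : HasStrictFDerivAt F F' x) (hv : v ∈ V) (hF'v : F' v ≠ 0) :
    ∀ᶠ u in 𝓝 x, u ∈ V → ¬ IsLocalMinOn F V u := by
  have hdescent : F' (-F' v • v) < 0 := by simpa using hF'v
  filter_upwards [eventually_nhds_eventually_add_smul_lt hF hdescent] with u hu huV hmin
  have hline : Tendsto (fun t : ℝ => u + t • (-F' v • v)) (𝓝[>] 0) (𝓝[V] u) :=
    tendsto_nhdsWithin_iff.mpr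
      ⟨(Continuous.tendsto' (by fun_prop) _ _ (by simp)).mono_left nhdsWithin_le_nhds,
        .of_forall fun t => V.add_mem huV (V.smul_mem t (V.smul_mem _ hv))⟩
  obtain ⟨t, hlt, hle⟩ := (hu.and (hline.eventually hmin)).exists
  exact hlt.not_ge hle

theorem hasStrictFDerivAt_norm_sq_zero :
    HasStrictFDerivAt (fun u : E => ‖u‖ ^ 2) (0 : E →L[ℝ] ℝ) 0 := by
  have hsum : (fun p : E × E => ‖p.1‖ + ‖p.2‖) =o[𝓝 (0, 0)] fun _ => (1 : ℝ) :=
    (isLittleO_one_iff ℝ).mpr <| Continuous.tendsto' (by fun_prop) _ _ (by simp)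
  have hdiff : (fun p : E × E => ‖p.1‖ - ‖p.2‖) =O[𝓝 (0, 0)] fun p => p.1 - p.2 :=
    isBigO_of_le _ fun p => abs_norm_sub_norm_le p.1 p.2
  refine .of_isLittleO <| ((hsum.mul_isBigO hdiff.norm_right).congr (fun p => ?_)
    fun p => one_mul _).of_norm_right
  rw [zero_apply]
  ring

end NormedSpace

theorem biInf_pos_of_eventually_notMem_of_norm_sq_le {E : Type*} [SeminormedAddCommGroup E]
    {S : Set E} {Φ : E → ℝ} (hS : ∀ᶠ u in 𝓝 0, u ∉ S) (hΦ : ∀ u ∈ S, ‖u‖ ^ 2 ≤ Φ u) :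
    (0 : EReal) < ⨅ u ∈ S, (Φ u : EReal) := by
  obtain ⟨r, hr, hball⟩ := Metric.eventually_nhds_iff.mp hS
  have hnorm (u : E) (hu : u ∈ S) : r ≤ ‖u‖ :=
    not_lt.mp fun h => hball (by rwa [dist_zero_right]) hu
  calc (0 : EReal) < (r ^ 2 : ℝ) := EReal.coe_pos.mpr (by positivity)
    _ ≤ ⨅ u ∈ S, (Φ u : EReal) := le_iInf₂ fun u hu => EReal.coe_le_coe <|
      (pow_le_pow_left₀ hr.le (hnorm u hu) 2).trans (hΦ u hu)

theorem hasStrictFDerivAt_of_hasGradientAt_of_lipschitz {𝕜 H : Type*} [RCLike 𝕜]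
    [NormedAddCommGroup H] [InnerProductSpace 𝕜 H] [CompleteSpace H] {f : H → 𝕜} {f' : H → H}
    {K : ℝ} (hf : ∀ u, HasGradientAt f (f' u) u) (hf' : ∀ u v, ‖f' u - f' v‖ ≤ K * ‖u - v‖)
    (x : H) : HasStrictFDerivAt f (InnerProductSpace.toDual 𝕜 H (f' x)) x := by
  have hcont : Continuous f' :=
    (LipschitzWith.of_dist_le' fun u v => by simpa only [dist_eq_norm] using hf' u v).continuous
  exact hasStrictFDerivAt_of_hasFDerivAt_of_continuousAt (.of_forall fun u => (hf u).hasFDerivAt)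
    ((InnerProductSpace.toDual 𝕜 H).continuous.comp hcont).continuousAt

theorem delta_pos_general {E : Type*} [NormedAddCommGroup E] [NormedSpace ℝ E]
    {V : Submodule ℝ E} {I J : E → ℝ} {I' J' : E →L[ℝ] ℝ} {c : ℝ} (hc : c ≠ 0)
    (hI : HasStrictFDerivAt I I' 0) (hJ : HasStrictFDerivAt J J' 0)
    (hInonneg : ∀ u, 0 ≤ I u) (hI0 : I 0 = 0) {v₀ : E} (hv₀V : v₀ ∈ V) (hv₀ : J' v₀ ≠ 0)
    {S : Set E} (hSV : S ⊆ V)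
    (hSmin : ∀ u ∈ S, IsLocalMinOn (fun u => ‖u‖ ^ 2 + I u + c * J u) V u) :
    (0 : EReal) < ⨅ u ∈ S, ((‖u‖ ^ 2 + I u : ℝ) : EReal) := by
  have hI' : I' = 0 :=
    IsLocalMin.hasFDerivAt_eq_zero (.of_forall fun u => hI0 ▸ hInonneg u) hI.hasFDerivAt
  have hderiv : HasStrictFDerivAt (fun u => ‖u‖ ^ 2 + I u + c * J u) (0 + I' + c • J') 0 :=
    (hasStrictFDerivAt_norm_sq_zero.add hI).add (hJ.const_mul c)
  have hderiv_ne : (0 + I' + c • J') v₀ ≠ 0 := by simpa [hI'] using ⟨hc, hv₀⟩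
  have hS : ∀ᶠ u in 𝓝 0, u ∉ S :=
    (eventually_not_isLocalMinOn_submodule hderiv hv₀V hderiv_ne).mono
      fun u hu huS => hu (hSV huS) (hSmin u huS)
  exact biInf_pos_of_eventually_notMem_of_norm_sq_le hS
    fun u _ => le_add_of_nonneg_right (hInonneg u)

theorem delta_pos
    {H : Type*} [NormedAddCommGroup H] [InnerProductSpace ℝ H] [CompleteSpace H]
    (V : Submodule ℝ H) (hV : IsClosed (V : Set H))
    (I J : H → ℝ) (I' J' : H → H) (ν L : ℝ)
    (hν₀ : 0 ≤ ν) (hν₂ : ν < 2) (hL : 0 < L)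
    (hIgrad : ∀ u, HasGradientAt I (I' u) u)
    (hJgrad : ∀ u, HasGradientAt J (J' u) u)
    (hIlip : ∀ u v, ‖I' u - I' v‖ ≤ ν * ‖u - v‖)
    (hJlip : ∀ u v, ‖J' u - J' v‖ ≤ L * ‖u - v‖)
    (hInonneg : ∀ u, 0 ≤ I u) (hI0 : I 0 = 0)
    (v₀ : H) (hv₀V : v₀ ∈ V) (hv₀ : ⟪J' 0, v₀⟫ ≠ 0)
    (S : Set H)
    (hS : S = {u : H | u ∈ V ∧ ∀ v ∈ V,
      ‖u‖ ^ 2 + I u + ((2 - ν) / L) * J u ≤ ‖v‖ ^ 2 + I v + ((2 - ν) / L) * J v}) :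
    (0 : EReal) < ⨅ u ∈ S, ((‖u‖ ^ 2 + I u : ℝ) : EReal) := by
  subst hS
  exact delta_pos_general (div_pos (sub_pos.mpr hν₂) hL).ne'
    (hasStrictFDerivAt_of_hasGradientAt_of_lipschitz hIgrad hIlip 0)
    (hasStrictFDerivAt_of_hasGradientAt_of_lipschitz hJgrad hJlip 0)
    hInonneg hI0 hv₀V hv₀ (fun _ hu => hu.1) fun _ hu => IsMinOn.localize hu.2
end

section
/- Let H be a real Hilbert space, V a closed linear subspace of H, and I, J : H → ℝ Fréchet differentiable functionals whose gradients ∇I and ∇J are Lipschitz with constants ν and L respectively, where 0 ≤ ν < 2 and L > 0. Assume I(u) ≥ 0 for all u ∈ H and I(0) = 0. Let S be the set of global minima over V of u ↦ ‖u‖² + I(u) + ((2 − ν)/L) J(u), and let δ := inf_{u ∈ S} (‖u‖² + I(u)) (with inf ∅ = +∞). Then for every real r with 0 < r < δ there exist λ* > L/(2 − ν) and u* ∈ V with ‖u*‖² + I(u*) = r such that J(u*) + λ* r = inf_{u ∈ V} ( J(u) + λ* (‖u‖² + I(u)) ). -/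
/-!
Put `Q u = ‖u‖² + I u` and `F = Q + ((2 - ν) / L) J`. A functional with `k`-Lipschitz gradient is
`k`-weakly convex, so `Q` is strongly convex, hence has bounded sublevel sets, and its modulus
`2 - ν` is exactly what makes up for the weak convexity of the term in `J`: `F` is convex. By weak
compactness, here in the form of an intersection of nested convex sets, `F` has a minimizer `w` on
`{u ∈ V | Q u ≤ r}`. As `r < δ`, the point `w` does not minimize `F` over `V`, so the convex
Lagrange multiplier rule gives `μ > 0` such that `Q w = r` and `w` minimizes
`F + μ Q = ((2 - ν) / L) (J + λ Q)` over `V`, where `λ = (L / (2 - ν)) (1 + μ)`.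
-/

open Bornology Filter Set Topology

theorem isClosed_sublevel_of_lowerSemicontinuousOn {X : Type*} [TopologicalSpace X] {K : Set X}
    {f : X → ℝ} (hK : IsClosed K) (hf : LowerSemicontinuousOn f K) (c : ℝ) :
    IsClosed {u ∈ K | f u ≤ c} := by
  obtain ⟨T, hT, heq⟩ := lowerSemicontinuousOn_iff_preimage_Iic.1 hf c
  have : {u ∈ K | f u ≤ c} = K ∩ T := heq
  exact this ▸ hK.inter hT

section StrongConvexity

variable {E : Type*} [NormedAddCommGroup E] [NormedSpace ℝ E] {s : Set E} {f g : E → ℝ} {m n : ℝ}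

theorem strongConvexOn_add_const_mul (hf : StrongConvexOn s m f) (hg : StrongConvexOn s n g)
    {c : ℝ} (hc : 0 ≤ c) : StrongConvexOn s (m + c * n) fun u => f u + c * g u := by
  refine ⟨hf.1, fun u hu v hv a b ha hb hab => ?_⟩
  have hfuv := hf.2 hu hv ha hb hab
  have hguv := mul_le_mul_of_nonneg_left (hg.2 hu hv ha hb hab) hc
  simp only [smul_eq_mul] at hfuv hguv ⊢
  linarith

theorem isBounded_sublevel_of_strongConvexOn (hf : StrongConvexOn s m f) (hm : 0 < m) {v : E}
    (hv : v ∈ s) (hlsc : LowerSemicontinuousWithinAt f s v) (c : ℝ) :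
    IsBounded {u ∈ s | f u ≤ c} := by
  obtain ⟨ε, hε, hnear⟩ : ∃ ε > 0, ∀ w ∈ s, ‖w - v‖ ≤ ε → f v - 1 ≤ f w := by
    obtain ⟨ε, hε, hsub⟩ := (nhdsWithin_hasBasis Metric.nhds_basis_closedBall s).eventually_iff.1
      (hlsc (f v - 1) (sub_one_lt _))
    exact ⟨ε, hε, fun w hw hwv => (hsub ⟨mem_closedBall_iff_norm.2 hwv, hw⟩).le⟩
  refine Metric.isBounded_closedBall.subset
    (t := Metric.closedBall v (ε + (|c - f v| + 1) / (m / 2 * ε))) fun u ⟨hu, huc⟩ => ?_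
  rw [mem_closedBall_iff_norm]
  set d := ‖u - v‖ with hd
  rcases le_or_gt d ε with hdε | hdε
  · exact hdε.trans (le_add_of_nonneg_right (by positivity))
  have hd₀ : 0 < d := hε.trans hdε
  -- If `u` were too far away, then strong convexity would push `f` below `f v - 1` at the point at
  -- distance `ε` from `v` on the segment to `u`.
  set t := ε / d with ht
  have ht₀ : 0 < t := div_pos hε hd₀
  have ht₁ : 0 ≤ 1 - t := sub_nonneg.2 ((div_le_one hd₀).2 hdε.le)
  have hdist : ‖(t • u + (1 - t) • v) - v‖ ≤ ε := by
    have : (t • u + (1 - t) • v) - v = t • (u - v) := by module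
    rw [this, norm_smul, Real.norm_of_nonneg ht₀.le, ← hd, ht, div_mul_cancel₀ _ hd₀.ne']
  have hchord : f v - 1 ≤ t * f u + (1 - t) * f v - t * (1 - t) * (m / 2 * d ^ 2) :=
    (hnear _ (hf.1 hu hv ht₀.le ht₁ (add_sub_cancel t 1)) hdist).trans
      (hf.2 hu hv ht₀.le ht₁ (add_sub_cancel t 1))
  have hstep : t * (f u - f v) ≤ |c - f v| :=
    calc t * (f u - f v) ≤ t * |c - f v| :=
          mul_le_mul_of_nonneg_left ((sub_le_sub_right huc _).trans (le_abs_self _)) ht₀.le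
      _ ≤ |c - f v| := mul_le_of_le_one_left (abs_nonneg _) (sub_nonneg.1 ht₁)
  have hsq : t * (1 - t) * (m / 2 * d ^ 2) = (d - ε) * (m / 2 * ε) := by
    rw [ht]; field_simp
  have hgrowth : (d - ε) * (m / 2 * ε) ≤ |c - f v| + 1 := by linarith
  exact sub_le_iff_le_add'.1 ((le_div_iff₀ (by positivity)).2 hgrowth)

end StrongConvexity

theorem strongConvexOn_two_norm_sq {E : Type*} [NormedAddCommGroup E] [InnerProductSpace ℝ E]
    {s : Set E} (hs : Convex ℝ s) : StrongConvexOn s 2 fun u => ‖u‖ ^ 2 := by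
  rw [strongConvexOn_iff_convex]
  simpa using convexOn_const 0 hs

section Gradient

variable {H : Type*} [NormedAddCommGroup H] [InnerProductSpace ℝ H] [CompleteSpace H]
  {s : Set H} {f : H → ℝ} {f' : H → H}

theorem convexOn_of_inner_gradient_sub_nonneg (hs : Convex ℝ s)
    (hf : ∀ u ∈ s, HasGradientAt f (f' u) u)
    (hmono : ∀ u ∈ s, ∀ v ∈ s, 0 ≤ inner ℝ (f' u - f' v) (u - v)) : ConvexOn ℝ s f := by
  refine ⟨hs, fun x hx y hy a b ha hb hab => ?_⟩
  set l : ℝ →ᵃ[ℝ] H := AffineMap.lineMap x y with hl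
  have hderiv (t : ℝ) (ht : t ∈ l ⁻¹' s) :
      HasDerivAt (fun τ => f (l τ)) (inner ℝ (f' (l t)) (y - x)) t :=
    (hf (l t) ht).hasFDerivAt.comp_hasDerivAt t AffineMap.hasDerivAt_lineMap
  have hmonoderiv : MonotoneOn (deriv fun τ => f (l τ)) (interior (l ⁻¹' s)) := by
    intro p hp q hq hpq
    have hlp : l p ∈ s := interior_subset (s := l ⁻¹' s) hp
    have hlq : l q ∈ s := interior_subset (s := l ⁻¹' s) hq
    rw [(hderiv p hlp).deriv, (hderiv q hlq).deriv]
    rcases hpq.eq_or_lt with rfl | hlt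
    · exact le_rfl
    have hinner := hmono (l q) hlq (l p) hlp
    have hsub : l q - l p = (q - p) • (y - x) := by
      simp only [hl, AffineMap.lineMap_apply_module']; module
    rw [hsub, inner_smul_right, inner_sub_left] at hinner
    exact sub_nonneg.1 (nonneg_of_mul_nonneg_right hinner (sub_pos.2 hlt))
  have hconv : ConvexOn ℝ (l ⁻¹' s) fun τ => f (l τ) :=
    hmonoderiv.convexOn_of_deriv (hs.affine_preimage l)
      (fun t ht => (hderiv t ht).continuousAt.continuousWithinAt)
      fun t ht => (hderiv t (interior_subset ht)).differentiableAt.differentiableWithinAt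
  have hsegment := hconv.2 (x := 0) (y := 1) (by simpa [hl] using hx) (by simpa [hl] using hy)
    ha hb hab
  simpa [hl, AffineMap.lineMap_apply_module, ← eq_sub_of_add_eq hab] using hsegment

theorem strongConvexOn_of_mul_norm_sub_sq_le_inner_gradient_sub {m : ℝ} (hs : Convex ℝ s)
    (hf : ∀ u ∈ s, HasGradientAt f (f' u) u)
    (hmono : ∀ u ∈ s, ∀ v ∈ s, m * ‖u - v‖ ^ 2 ≤ inner ℝ (f' u - f' v) (u - v)) :
    StrongConvexOn s m f := by
  rw [strongConvexOn_iff_convex]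
  refine convexOn_of_inner_gradient_sub_nonneg (f' := fun u => f' u - m • u) hs
    (fun u hu => ?_) fun u hu v hv => ?_
  · rw [hasGradientAt_iff_hasFDerivAt]
    refine ((hf u hu).hasFDerivAt.sub
      ((hasStrictFDerivAt_norm_sq u).hasFDerivAt.const_mul (m / 2))).congr_fderiv ?_
    ext v
    simp only [sub_apply, InnerProductSpace.toDual_apply_apply, smul_apply, coe_innerSL_apply,
      nsmul_eq_mul, Nat.cast_ofNat, smul_eq_mul, map_sub, map_smul, sub_right_inj]
    ring
  · rw [sub_sub_sub_comm, ← smul_sub, inner_sub_left, real_inner_smul_left,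
      real_inner_self_eq_norm_sq]
    exact sub_nonneg.2 (hmono u hu v hv)

theorem strongConvexOn_neg_of_lipschitz_gradient {k : ℝ} (hs : Convex ℝ s)
    (hf : ∀ u ∈ s, HasGradientAt f (f' u) u)
    (hlip : ∀ u ∈ s, ∀ v ∈ s, ‖f' u - f' v‖ ≤ k * ‖u - v‖) : StrongConvexOn s (-k) f := by
  refine strongConvexOn_of_mul_norm_sub_sq_le_inner_gradient_sub hs hf fun u hu v hv => ?_
  calc -k * ‖u - v‖ ^ 2 = -(k * ‖u - v‖ * ‖u - v‖) := by ring
    _ ≤ -(‖f' u - f' v‖ * ‖u - v‖) :=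
      neg_le_neg (mul_le_mul_of_nonneg_right (hlip u hu v hv) (norm_nonneg _))
    _ ≤ inner ℝ (f' u - f' v) (u - v) := neg_le_of_abs_le (abs_real_inner_le_norm _ _)

end Gradient

section NestedConvex

variable {H : Type*} [NormedAddCommGroup H] [InnerProductSpace ℝ H]

theorem exists_mem_forall_norm_sub_sq_le {C : Set H} (hne : C.Nonempty) (hC : IsComplete C)
    (hconv : Convex ℝ C) : ∃ p ∈ C, ∀ w ∈ C, ‖w - p‖ ^ 2 ≤ ‖w‖ ^ 2 - ‖p‖ ^ 2 := by
  obtain ⟨p, hp, hmin⟩ := exists_norm_eq_iInf_of_complete_convex hne hC hconv 0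
  refine ⟨p, hp, fun w hw => ?_⟩
  have hinner := (norm_eq_iInf_iff_real_inner_le_zero hconv hp).1 hmin w hw
  rw [zero_sub, inner_neg_left, inner_sub_right, real_inner_self_eq_norm_sq] at hinner
  rw [norm_sub_sq_real, real_inner_comm]
  linarith

variable [CompleteSpace H]

theorem nonempty_iInter_of_antitone_isClosed_convex {ι : Type*} [SemilatticeSup ι] {C : ι → Set H}
    (hanti : Antitone C) (hne : ∀ i, (C i).Nonempty) (hclosed : ∀ i, IsClosed (C i))
    (hconv : ∀ i, Convex ℝ (C i)) {i₀ : ι} (hbdd : IsBounded (C i₀)) : (⋂ i, C i).Nonempty := by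
  have : Nonempty ι := ⟨i₀⟩
  choose p hpmem hpdist using fun i =>
    exists_mem_forall_norm_sub_sq_le (hne i) (hclosed i).isComplete (hconv i)
  have hdist (i j : ι) (hij : i ≤ j) : ‖p j - p i‖ ^ 2 ≤ ‖p j‖ ^ 2 - ‖p i‖ ^ 2 :=
    hpdist i (p j) (hanti hij (hpmem j))
  have hmono : Monotone fun i => ‖p i‖ ^ 2 := fun i j hij =>
    sub_nonneg.1 ((sq_nonneg _).trans (hdist i j hij))
  have hbound : BddAbove (range fun i => ‖p i‖ ^ 2) := by
    obtain ⟨R, hR⟩ := hbdd.exists_norm_le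
    refine ⟨R ^ 2, forall_mem_range.2 fun i => (hmono (le_sup_left (b := i₀))).trans ?_⟩
    exact pow_le_pow_left₀ (norm_nonneg _) (hR _ (hanti le_sup_right (hpmem _))) 2
  set M := ⨆ i, ‖p i‖ ^ 2
  have hlim : Tendsto (fun i => ‖p i‖ ^ 2) atTop (𝓝 M) := tendsto_atTop_ciSup hmono hbound
  have hcauchy : CauchySeq p := by
    refine cauchySeq_of_le_tendsto_0' (fun i => √(M - ‖p i‖ ^ 2)) (fun i j hij => ?_) ?_
    · rw [dist_comm, dist_eq_norm]
      exact Real.le_sqrt_of_sq_le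
        ((hdist i j hij).trans (sub_le_sub_right (le_ciSup hbound j) _))
    · simpa only [sub_self, Real.sqrt_zero] using (hlim.const_sub M).sqrt
  obtain ⟨q, hq⟩ := cauchySeq_tendsto_of_complete hcauchy
  refine ⟨q, mem_iInter.2 fun i => (hclosed i).mem_of_tendsto hq ?_⟩
  filter_upwards [eventually_ge_atTop i] with j hij using hanti hij (hpmem j)

theorem exists_isMinOn_of_quasiconvexOn {K : Set H} {f : H → ℝ} (hf : QuasiconvexOn ℝ K f)
    (hlsc : LowerSemicontinuousOn f K) (hne : K.Nonempty) (hK : IsClosed K) (hbdd : IsBounded K) :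
    ∃ u ∈ K, IsMinOn f K u := by
  -- A common point of the nested sublevel sets of the attained values is a minimizer.
  obtain ⟨v, hv⟩ := hne
  obtain ⟨u, hu⟩ := nonempty_iInter_of_antitone_isClosed_convex
    (ι := (f '' K)ᵒᵈ) (C := fun c => {u ∈ K | f u ≤ (OrderDual.ofDual c).1})
    (i₀ := OrderDual.toDual ⟨f v, v, hv, rfl⟩)
    (fun c d hcd u hu => ⟨hu.1, hu.2.trans hcd⟩)
    (fun ⟨_, w, hw, hfw⟩ => ⟨w, hw, hfw.le⟩)
    (fun _ => isClosed_sublevel_of_lowerSemicontinuousOn hK hlsc _) (fun _ => hf _)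
    (hbdd.subset (sep_subset _ _))
  rw [mem_iInter] at hu
  exact ⟨u, (hu ⟨f v, v, hv, rfl⟩).1, fun w hw => (hu ⟨f w, w, hw, rfl⟩).2⟩

end NestedConvex

section Multiplier

variable {E : Type*} [AddCommGroup E] [Module ℝ E] {K : Set E} {f g : E → ℝ} {r m : ℝ}

theorem div_sub_le_div_sub_of_convexOn (hf : ConvexOn ℝ K f) (hg : ConvexOn ℝ K g)
    (hm : ∀ u ∈ K, g u ≤ r → m ≤ f u) {u v : E} (hu : u ∈ K) (hv : v ∈ K)
    (hgu : r < g u) (hgv : g v < r) : (m - f u) / (g u - r) ≤ (f v - m) / (r - g v) := by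
  -- The weights are those for which the chord of `g` takes the value `r`.
  set a := r - g v
  set b := g u - r
  have ha : 0 < a := sub_pos.2 hgv
  have hb : 0 < b := sub_pos.2 hgu
  have hgw := (convexOn_iff_div.1 hg).2 hu hv ha.le hb.le (add_pos ha hb)
  have hfw := (convexOn_iff_div.1 hf).2 hu hv ha.le hb.le (add_pos ha hb)
  have hr : (a / (a + b)) • g u + (b / (a + b)) • g v = r := by
    simp only [smul_eq_mul]; field_simp; ring
  have hw : (a / (a + b)) • u + (b / (a + b)) • v ∈ K :=
    convex_iff_div.1 hf.1 hu hv ha.le hb.le (add_pos ha hb)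
  have hmw : m ≤ (a / (a + b)) • f u + (b / (a + b)) • f v :=
    (hm _ hw (hgw.trans_eq hr)).trans hfw
  have hchord : (a / (a + b)) • f u + (b / (a + b)) • f v = (a * f u + b * f v) / (a + b) := by
    simp only [smul_eq_mul]; field_simp
  rw [hchord, le_div_iff₀ (add_pos ha hb)] at hmw
  rw [div_le_div_iff₀ hb ha]
  linarith

theorem exists_pos_multiplier_of_convexOn (hf : ConvexOn ℝ K f) (hg : ConvexOn ℝ K g)
    (hm : ∀ u ∈ K, g u ≤ r → m ≤ f u) (hslater : ∃ v ∈ K, g v < r) (hlt : ∃ u ∈ K, f u < m) :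
    ∃ μ : ℝ, 0 < μ ∧ ∀ u ∈ K, m ≤ f u + μ * (g u - r) := by
  obtain ⟨v₀, hv₀, hgv₀⟩ := hslater
  obtain ⟨u₀, hu₀, hfu₀⟩ := hlt
  have hgu₀ : r < g u₀ := not_le.1 fun hle => (hm u₀ hu₀ hle).not_gt hfu₀
  obtain ⟨μ, hμupper, hμlower⟩ := exists_between_of_forall_le
    (s := (fun u => (m - f u) / (g u - r)) '' {u ∈ K | r < g u})
    (t := (fun v => (f v - m) / (r - g v)) '' {v ∈ K | g v < r})
    ⟨_, u₀, ⟨hu₀, hgu₀⟩, rfl⟩ ⟨_, v₀, ⟨hv₀, hgv₀⟩, rfl⟩ (by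
      rintro _ ⟨u, ⟨hu, hgu⟩, rfl⟩ _ ⟨v, ⟨hv, hgv⟩, rfl⟩
      exact div_sub_le_div_sub_of_convexOn hf hg hm hu hv hgu hgv)
  refine ⟨μ, ?_, fun u hu => ?_⟩
  · exact (div_pos (sub_pos.2 hfu₀) (sub_pos.2 hgu₀)).trans_le (hμupper ⟨u₀, ⟨hu₀, hgu₀⟩, rfl⟩)
  · rcases lt_trichotomy (g u) r with hgu | hgu | hgu
    · have := (le_div_iff₀ (sub_pos.2 hgu)).1 (hμlower ⟨u, ⟨hu, hgu⟩, rfl⟩)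
      linarith
    · simpa [hgu] using hm u hu hgu.le
    · have := (div_le_iff₀ (sub_pos.2 hgu)).1 (hμupper ⟨u, ⟨hu, hgu⟩, rfl⟩)
      linarith

end Multiplier

section Hilbert

variable {H : Type*} [NormedAddCommGroup H] [InnerProductSpace ℝ H] [CompleteSpace H] {K : Set H}

theorem exists_pos_multiplier_isMinOn_add_mul {f g : H → ℝ} {r : ℝ} (hK : IsClosed K)
    (hf : ConvexOn ℝ K f) (hg : ConvexOn ℝ K g)
    (hflsc : LowerSemicontinuousOn f K) (hglsc : LowerSemicontinuousOn g K)
    (hbdd : IsBounded {u ∈ K | g u ≤ r}) (hslater : ∃ v ∈ K, g v < r)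
    (hmin : ∀ u ∈ K, IsMinOn f K u → r < g u) :
    ∃ μ > 0, ∃ u ∈ K, g u = r ∧ IsMinOn (fun v => f v + μ * g v) K u := by
  obtain ⟨w, ⟨hwK, hgw⟩, hw⟩ : ∃ w ∈ {u ∈ K | g u ≤ r}, IsMinOn f {u ∈ K | g u ≤ r} w :=
    exists_isMinOn_of_quasiconvexOn
      (hf.subset (sep_subset _ _) (hg.convex_le r)).quasiconvexOn
      (hflsc.mono (sep_subset _ _)) (hslater.imp fun _ hv => ⟨hv.1, hv.2.le⟩)
      (isClosed_sublevel_of_lowerSemicontinuousOn hK hglsc r) hbdd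
  have hlt : ∃ u ∈ K, f u < f w := by
    by_contra! hge
    exact (hmin w hwK hge).not_ge hgw
  obtain ⟨μ, hμ, hmult⟩ :=
    exists_pos_multiplier_of_convexOn hf hg (fun u hu hgu => hw ⟨hu, hgu⟩) hslater hlt
  have hgw_eq : g w = r :=
    hgw.antisymm <| sub_nonneg.1 <| nonneg_of_mul_nonneg_right
      (le_add_iff_nonneg_right (f w) |>.1 (hmult w hwK)) hμ
  refine ⟨μ, hμ, w, hwK, hgw_eq, fun v hv => ?_⟩
  have := hmult v hv
  simp only [mem_ofPred_eq, hgw_eq]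
  linarith

theorem lagrange_multiplier_exists_general (hK : IsClosed K) {I J : H → ℝ} {ν L : ℝ}
    (hν : ν < 2) (hL : 0 < L) (hI : StrongConvexOn K (-ν) I) (hJ : StrongConvexOn K (-L) J)
    (hIlsc : LowerSemicontinuousOn I K) (hJlsc : LowerSemicontinuousOn J K) {r : ℝ}
    (hslater : ∃ v ∈ K, ‖v‖ ^ 2 + I v < r)
    (hmin : ∀ u ∈ K, IsMinOn (fun v => ‖v‖ ^ 2 + I v + ((2 - ν) / L) * J v) K u →
      r < ‖u‖ ^ 2 + I u) :
    ∃ lam : ℝ, ∃ ustar : H, L / (2 - ν) < lam ∧ ustar ∈ K ∧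
      ‖ustar‖ ^ 2 + I ustar = r ∧
      IsLeast ((fun u : H => J u + lam * (‖u‖ ^ 2 + I u)) '' K) (J ustar + lam * r) := by
  obtain ⟨v, hvK, hQv⟩ := hslater
  have hν' : 0 < 2 - ν := sub_pos.2 hν
  have hQ : StrongConvexOn K (2 - ν) fun u => ‖u‖ ^ 2 + I u := by
    simpa [sub_eq_add_neg] using
      strongConvexOn_add_const_mul (strongConvexOn_two_norm_sq hI.1) hI zero_le_one
  have hQlsc : LowerSemicontinuousOn (fun u => ‖u‖ ^ 2 + I u) K :=
    (continuous_norm.pow 2).lowerSemicontinuous.lowerSemicontinuousOn K |>.add hIlsc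
  have hF : ConvexOn ℝ K fun u => ‖u‖ ^ 2 + I u + ((2 - ν) / L) * J u := by
    have hmodulus : 2 - ν + (2 - ν) / L * -L = 0 := by field_simp; ring
    rw [← strongConvexOn_zero, ← hmodulus]
    exact strongConvexOn_add_const_mul hQ hJ (div_pos hν' hL).le
  have hFlsc : LowerSemicontinuousOn (fun u => ‖u‖ ^ 2 + I u + ((2 - ν) / L) * J u) K :=
    hQlsc.add <| (continuous_const_mul ((2 - ν) / L)).comp_lowerSemicontinuousOn hJlsc
      (monotone_mul_left_of_nonneg (div_pos hν' hL).le)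
  obtain ⟨μ, hμ, w, hwK, hQw, hw⟩ := exists_pos_multiplier_isMinOn_add_mul hK hF
    (hQ.strictConvexOn hν').convexOn hFlsc hQlsc
    (isBounded_sublevel_of_strongConvexOn hQ hν' hvK (hQlsc v hvK) r) ⟨v, hvK, hQv⟩ hmin
  have hscale (u : H) : J u + L / (2 - ν) * (1 + μ) * (‖u‖ ^ 2 + I u) = L / (2 - ν) *
      (‖u‖ ^ 2 + I u + ((2 - ν) / L) * J u + μ * (‖u‖ ^ 2 + I u)) := by
    field_simp
    ring
  have hpos : 0 < L / (2 - ν) := div_pos hL hν'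
  refine ⟨L / (2 - ν) * (1 + μ), w, lt_mul_of_one_lt_right hpos (lt_add_of_pos_right 1 hμ), hwK,
    hQw, ⟨w, hwK, by simp only [hQw]⟩, ?_⟩
  rintro _ ⟨u, hu, rfl⟩
  simp only [← hQw, hscale]
  exact mul_le_mul_of_nonneg_left (hw hu) hpos.le

end Hilbert

theorem lagrange_multiplier_exists
    {H : Type*} [NormedAddCommGroup H] [InnerProductSpace ℝ H] [CompleteSpace H]
    (V : Submodule ℝ H) (hV : IsClosed (V : Set H))
    (I J : H → ℝ) (I' J' : H → H) (ν L : ℝ)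
    (hν₀ : 0 ≤ ν) (hν₂ : ν < 2) (hL : 0 < L)
    (hIgrad : ∀ u, HasGradientAt I (I' u) u)
    (hJgrad : ∀ u, HasGradientAt J (J' u) u)
    (hIlip : ∀ u v, ‖I' u - I' v‖ ≤ ν * ‖u - v‖)
    (hJlip : ∀ u v, ‖J' u - J' v‖ ≤ L * ‖u - v‖)
    (hInonneg : ∀ u, 0 ≤ I u) (hI0 : I 0 = 0)
    (S : Set H)
    (hS : S = {u : H | u ∈ V ∧ ∀ v ∈ V,
      ‖u‖ ^ 2 + I u + ((2 - ν) / L) * J u ≤ ‖v‖ ^ 2 + I v + ((2 - ν) / L) * J v})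
    (r : ℝ) (hr₀ : 0 < r)
    (hrδ : (r : EReal) < ⨅ u ∈ S, ((‖u‖ ^ 2 + I u : ℝ) : EReal)) :
    ∃ lam : ℝ, ∃ ustar : H, L / (2 - ν) < lam ∧ ustar ∈ V ∧
      ‖ustar‖ ^ 2 + I ustar = r ∧
      IsLeast ((fun u : H => J u + lam * (‖u‖ ^ 2 + I u)) '' (V : Set H))
        (J ustar + lam * r) :=
  lagrange_multiplier_exists_general hV hν₂ hL
    (strongConvexOn_neg_of_lipschitz_gradient V.convex (fun u _ => hIgrad u)
      fun u _ v _ => hIlip u v)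
    (strongConvexOn_neg_of_lipschitz_gradient V.convex (fun u _ => hJgrad u)
      fun u _ v _ => hJlip u v)
    (HasGradientAt.continuousOn fun u _ => hIgrad u).lowerSemicontinuousOn
    (HasGradientAt.continuousOn fun u _ => hJgrad u).lowerSemicontinuousOn
    ⟨0, V.zero_mem, by simpa [hI0] using hr₀⟩
    fun u hu hmin => EReal.coe_lt_coe_iff.1 (hrδ.trans_le (iInf₂_le u (hS ▸ ⟨hu, hmin⟩)))
end

section
/- (Abstract form of Theorem 2.) Let H be a real Hilbert space, V a closed linear subspace of H, and I, J : H → ℝ Fréchet differentiable functionals whose gradients ∇I and ∇J are Lipschitz with constants ν and L respectively, where 0 ≤ ν < 2 and L > 0. Assume I(u) ≥ 0 for all u ∈ H, I(0) = 0, and there exists v₀ ∈ V with ⟨∇J(0), v₀⟩ ≠ 0. Let S be the set of global minima over V of u ↦ ‖u‖² + I(u) + ((2 − ν)/L) J(u), and let S₁ be the set of global minima over V of u ↦ ‖u‖² + I(u) − ((2 − ν)/L) J(u). Then δ₁ := min{ inf_{u ∈ S} (‖u‖² + I(u)), inf_{u ∈ S₁} (‖u‖² + I(u)) } > 0 (with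 inf ∅ = +∞), and for each real r with 0 < r < δ₁, the restriction of J to the set { u ∈ V : ‖u‖² + I(u) = r } has a unique global minimum and a unique global maximum. -/
open scoped RealInnerProductSpace

/-!
Write `Φ u = ‖u‖² + I u` and `c = (2 - ν) / L`. A functional with `K`-Lipschitz gradient becomes
convex once `K / 2 * ‖u‖²` is added to it, so `Φ` is strongly convex and `Ψ = Φ + c * J` is still
convex. On the level set `Φ = r`, minimizing `J` amounts to minimizing `Ψ`, which has a minimum
over the closed bounded convex set `{u ∈ V | Φ u ≤ r}`. If `r < δ₁`, no minimizer of `Ψ` over `V`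
lies in this set, so by convexity the constraint `Φ ≤ r` is active at every constrained minimizer;
were there two of them, their midpoint would be a third one, with `Φ < r` by strict convexity.
Maxima of `J` are minima of `-J`.

A minimizer `u` of `Φ ± c * J` over `V` satisfies `⟪2 • u + I' u ± c • J' u, v₀⟫ = 0`. At `u = 0`
the left-hand side is `± c * ⟪J' 0, v₀⟫ ≠ 0`, so by continuity minimizers stay away from `0`, and
`δ₁ > 0`.
-/

open Filter Set Topology

section Gradient

variable {H : Type*} [NormedAddCommGroup H] [InnerProductSpace ℝ H] [CompleteSpace H]

theorem hasGradientAt_add {f g : H → ℝ} {f' g' u : H} (hf : HasGradientAt f f' u)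
    (hg : HasGradientAt g g' u) : HasGradientAt (fun v => f v + g v) (f' + g') u := by
  rw [hasGradientAt_iff_hasFDerivAt, map_add]
  exact hf.hasFDerivAt.add hg.hasFDerivAt

theorem hasGradientAt_const_mul {f : H → ℝ} {f' u : H} (c : ℝ) (hf : HasGradientAt f f' u) :
    HasGradientAt (fun v => c * f v) (c • f') u := by
  rw [hasGradientAt_iff_hasFDerivAt, map_smul]
  exact hf.hasFDerivAt.const_mul c

theorem hasGradientAt_neg {f : H → ℝ} {f' u : H} (hf : HasGradientAt f f' u) :
    HasGradientAt (fun v => -f v) (-f') u := by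
  rw [hasGradientAt_iff_hasFDerivAt, map_neg]
  exact hf.hasFDerivAt.neg

theorem hasGradientAt_norm_sq (u : H) :
    HasGradientAt (fun v : H => ‖v‖ ^ 2) ((2 : ℝ) • u) u := by
  rw [hasGradientAt_iff_hasFDerivAt]
  refine (hasStrictFDerivAt_norm_sq u).hasFDerivAt.congr_fderiv ?_
  ext v
  simp

theorem hasDerivAt_comp_lineMap_of_hasGradientAt {f : H → ℝ} {f' x y : H} {t : ℝ}
    (hf : HasGradientAt f f' (AffineMap.lineMap x y t)) :
    HasDerivAt (fun s : ℝ => f (AffineMap.lineMap x y s)) ⟪f', y - x⟫ t :=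
  (hf.hasFDerivAt.comp_hasDerivAt t AffineMap.hasDerivAt_lineMap).congr_deriv (by simp)

theorem convexOn_univ_of_gradient_monotone {f : H → ℝ} {f' : H → H}
    (hf : ∀ u, HasGradientAt f (f' u) u) (hmono : ∀ u v, 0 ≤ ⟪f' u - f' v, u - v⟫) :
    ConvexOn ℝ univ f := by
  refine ⟨convex_univ, fun x _ y _ a b ha hb hab => ?_⟩
  have hderiv (t : ℝ) := hasDerivAt_comp_lineMap_of_hasGradientAt (hf (AffineMap.lineMap x y t))
  have hline : ConvexOn ℝ univ fun t : ℝ => f (AffineMap.lineMap x y t) := by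
    refine Monotone.convexOn_univ_of_deriv (fun t => (hderiv t).differentiableAt) ?_
    refine monotone_iff_forall_lt.2 fun s t hst => ?_
    have hincr : (AffineMap.lineMap x y t : H) - AffineMap.lineMap x y s = (t - s) • (y - x) := by
      simp only [AffineMap.lineMap_apply_module]
      module
    have h := hmono (AffineMap.lineMap x y t) (AffineMap.lineMap x y s)
    rw [hincr, real_inner_smul_right] at h
    rw [(hderiv s).deriv, (hderiv t).deriv, ← sub_nonneg, ← inner_sub_left]
    exact nonneg_of_mul_nonneg_right h (sub_pos.2 hst)
  have hline_b : AffineMap.lineMap x y b = a • x + b • y := by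
    rw [AffineMap.lineMap_apply_module, ← hab, add_sub_cancel_right]
  simpa [hline_b] using hline.2 (mem_univ 0) (mem_univ 1) ha hb hab

theorem convexOn_add_norm_sq_of_lipschitz_gradient {f : H → ℝ} {f' : H → H} {K : ℝ}
    (hf : ∀ u, HasGradientAt f (f' u) u) (hlip : ∀ u v, ‖f' u - f' v‖ ≤ K * ‖u - v‖) :
    ConvexOn ℝ univ fun u => f u + K / 2 * ‖u‖ ^ 2 := by
  refine convexOn_univ_of_gradient_monotone
    (fun u => hasGradientAt_add (hf u) (hasGradientAt_const_mul (K / 2) (hasGradientAt_norm_sq u)))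
    fun u v => ?_
  have hinner : -(K * ‖u - v‖ ^ 2) ≤ ⟪f' u - f' v, u - v⟫ := by
    refine neg_le_of_abs_le ((abs_real_inner_le_norm _ _).trans ?_)
    calc ‖f' u - f' v‖ * ‖u - v‖ ≤ K * ‖u - v‖ * ‖u - v‖ := by gcongr; exact hlip u v
      _ = K * ‖u - v‖ ^ 2 := by ring
  have hsplit : f' u + (K / 2) • (2 : ℝ) • u - (f' v + (K / 2) • (2 : ℝ) • v) =
      (f' u - f' v) + K • (u - v) := by module
  rw [hsplit, inner_add_left, real_inner_smul_left, real_inner_self_eq_norm_sq]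
  linarith

theorem inner_gradient_eq_zero_of_isMinOn {V : Submodule ℝ H} {f : H → ℝ} {f' u v : H}
    (hf : HasGradientAt f f' u) (hu : u ∈ V) (hmin : IsMinOn f V u) (hv : v ∈ V) :
    ⟪f', v⟫ = 0 := by
  have hderiv : HasDerivAt (fun t : ℝ => f (AffineMap.lineMap u (u + v) t)) ⟪f', v⟫ 0 := by
    simpa using hasDerivAt_comp_lineMap_of_hasGradientAt (x := u) (y := u + v) (t := 0)
      (by simpa using hf)
  refine IsLocalMin.hasDerivAt_eq_zero (Eventually.of_forall fun t => ?_) hderiv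
  have hmem : t • v + u ∈ V := V.add_mem (V.smul_mem t hv) hu
  simpa [AffineMap.lineMap_apply] using hmin hmem

theorem exists_pos_forall_isMinOn_le_dist {V : Submodule ℝ H} {f : H → ℝ} {f' : H → H} {v w : H}
    (hf : ∀ u, HasGradientAt f (f' u) u) (hf' : ContinuousAt f' w) (hv : v ∈ V)
    (hne : ⟪f' w, v⟫ ≠ 0) :
    ∃ ε > 0, ∀ u ∈ V, IsMinOn f V u → ε ≤ dist u w := by
  have hnear : ∀ᶠ u in 𝓝 w, ⟪f' u, v⟫ ≠ 0 :=
    (hf'.inner continuousAt_const).eventually_ne hne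
  obtain ⟨ε, hε, hball⟩ := Metric.eventually_nhds_iff.1 hnear
  refine ⟨ε, hε, fun u hu hmin => ?_⟩
  by_contra! hlt
  exact hball hlt (inner_gradient_eq_zero_of_isMinOn (hf u) hu hmin hv)

end Gradient

section Existence

variable {H : Type*} [NormedAddCommGroup H] [InnerProductSpace ℝ H]

theorem exists_mem_norm_sub_sq_add_norm_sub_sq_le {A : Set H} (hne : A.Nonempty)
    (hA : IsComplete A) (hconv : Convex ℝ A) (u : H) :
    ∃ p ∈ A, ∀ w ∈ A, ‖u - p‖ ^ 2 + ‖w - p‖ ^ 2 ≤ ‖u - w‖ ^ 2 := by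
  obtain ⟨p, hpA, hp⟩ := exists_norm_eq_iInf_of_complete_convex hne hA hconv u
  refine ⟨p, hpA, fun w hw => ?_⟩
  have hobtuse := (norm_eq_iInf_iff_real_inner_le_zero hconv hpA).1 hp w hw
  have hexpand := norm_sub_sq_real (u - p) (w - p)
  rw [sub_sub_sub_cancel_right] at hexpand
  linarith

variable [CompleteSpace H]

-- The points of minimal norm in the sets `A n` form a Cauchy sequence.
theorem nonempty_iInter_of_antitone_convex {A : ℕ → Set H} (hanti : Antitone A)
    (hne : ∀ n, (A n).Nonempty) (hclosed : ∀ n, IsClosed (A n)) (hconv : ∀ n, Convex ℝ (A n))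
    (hbdd : Bornology.IsBounded (A 0)) : (⋂ n, A n).Nonempty := by
  choose p hpA hp using fun n =>
    exists_mem_norm_sub_sq_add_norm_sub_sq_le (hne n) (hclosed n).isComplete (hconv n) 0
  simp only [zero_sub, norm_neg] at hp
  have hgap {n m : ℕ} (hnm : n ≤ m) : ‖p n‖ ^ 2 + ‖p m - p n‖ ^ 2 ≤ ‖p m‖ ^ 2 :=
    hp n (p m) (hanti hnm (hpA m))
  have hmono : Monotone fun n => ‖p n‖ ^ 2 := fun n m hnm => by
    linarith [hgap hnm, sq_nonneg ‖p m - p n‖]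
  have hbdd_norm : BddAbove (range fun n => ‖p n‖ ^ 2) := by
    obtain ⟨R, hR⟩ := hbdd.exists_norm_le
    refine ⟨R ^ 2, forall_mem_range.2 fun n => ?_⟩
    gcongr
    exact hR _ (hanti n.zero_le (hpA n))
  have hlim := tendsto_atTop_ciSup hmono hbdd_norm
  set ℓ := ⨆ n, ‖p n‖ ^ 2
  have hcauchy : CauchySeq p := by
    refine cauchySeq_of_le_tendsto_0' (fun n => √(ℓ - ‖p n‖ ^ 2)) (fun n m hnm => ?_) ?_
    · rw [dist_comm, dist_eq_norm]
      exact Real.le_sqrt_of_sq_le (by linarith [hgap hnm, le_ciSup hbdd_norm m])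
    · simpa using (hlim.const_sub ℓ).sqrt
  obtain ⟨x, hx⟩ := cauchySeq_tendsto_of_complete hcauchy
  refine ⟨x, mem_iInter.2 fun n => (hclosed n).mem_of_tendsto hx ?_⟩
  filter_upwards [eventually_ge_atTop n] with m hnm using hanti hnm (hpA m)

theorem isClosed_sep_le_of_lowerSemicontinuousOn {X α : Type*} [TopologicalSpace X] [LinearOrder α]
    {s : Set X} {f : X → α} (hs : IsClosed s) (hf : LowerSemicontinuousOn f s) (a : α) :
    IsClosed {x ∈ s | f x ≤ a} := by
  obtain ⟨t, ht, hst⟩ := lowerSemicontinuousOn_iff_preimage_Iic.1 hf a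
  have heq : {x ∈ s | f x ≤ a} = s ∩ t := hst
  exact heq ▸ hs.inter ht

theorem exists_isMinOn_of_convexOn_of_isBounded {s : Set H} {f : H → ℝ} (hne : s.Nonempty)
    (hs : IsClosed s) (hbdd : Bornology.IsBounded s) (hf : ConvexOn ℝ s f)
    (hfc : LowerSemicontinuousOn f s) : ∃ x ∈ s, IsMinOn f s x := by
  -- In `EReal` the infimum exists even though `f` is not yet known to be bounded below.
  obtain ⟨c, hc_anti, hc_lim, hc_mem⟩ := exists_seq_tendsto_sInf
    (hne.image fun u => (f u : EReal)) (OrderBot.bddBelow _)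
  choose u hus hu using hc_mem
  beta_reduce at hu
  obtain ⟨x, hx⟩ := nonempty_iInter_of_antitone_convex (A := fun n => {v ∈ s | f v ≤ f (u n)})
    (fun n m hnm v hv => ⟨hv.1, hv.2.trans (by
      rw [← EReal.coe_le_coe_iff, hu, hu]
      exact hc_anti hnm)⟩)
    (fun n => ⟨u n, hus n, le_rfl⟩)
    (fun n => isClosed_sep_le_of_lowerSemicontinuousOn hs hfc (f (u n)))
    (fun n => hf.convex_le (f (u n))) (hbdd.subset (sep_subset _ _))
  rw [mem_iInter] at hx
  have hle : (f x : EReal) ≤ sInf ((fun u => (f u : EReal)) '' s) :=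
    ge_of_tendsto' hc_lim fun n => hu n ▸ EReal.coe_le_coe_iff.2 (hx n).2
  exact ⟨x, (hx 0).1, fun y hy =>
    EReal.coe_le_coe_iff.1 (hle.trans (sInf_le (mem_image_of_mem _ hy)))⟩

end Existence

section LevelSets

theorem isMinOn_of_isMinOn_sublevel_of_lt {E : Type*} [AddCommGroup E] [TopologicalSpace E]
    [Module ℝ E] [IsTopologicalAddGroup E] [ContinuousSMul ℝ E] {s : Set E} {Φ Ψ : E → ℝ} {r : ℝ}
    {u : E} (hΨ : ConvexOn ℝ s Ψ) (hΦ : ContinuousWithinAt Φ s u) (hu : u ∈ s) (hlt : Φ u < r)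
    (hmin : IsMinOn Ψ {v ∈ s | Φ v ≤ r} u) : IsMinOn Ψ s u := by
  refine IsMinOn.of_isLocalMinOn_of_convexOn hu ?_ hΨ
  filter_upwards [hΦ.eventually_lt_const hlt, self_mem_nhdsWithin] with v hvr hvs
  exact hmin ⟨hvs, hvr.le⟩

variable {H : Type*} [NormedAddCommGroup H] [InnerProductSpace ℝ H] [CompleteSpace H]

theorem existsUnique_isMinOn_level_of_convexOn {s : Set H} {Φ Ψ : H → ℝ} {r : ℝ}
    (hs : IsClosed s) (hΦ : StrictConvexOn ℝ s Φ) (hΦc : ContinuousOn Φ s)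
    (hΨ : ConvexOn ℝ s Ψ) (hΨc : LowerSemicontinuousOn Ψ s)
    (hne : {u ∈ s | Φ u ≤ r}.Nonempty) (hbdd : Bornology.IsBounded {u ∈ s | Φ u ≤ r})
    (hcrit : ∀ u ∈ s, IsMinOn Ψ s u → r < Φ u) :
    ∃! u, u ∈ {v ∈ s | Φ v = r} ∧ IsMinOn Ψ {v ∈ s | Φ v = r} u := by
  set C := {u ∈ s | Φ u ≤ r}
  have hCs : C ⊆ s := sep_subset _ _
  have hC : Convex ℝ C := hΦ.convexOn.convex_le r
  have hactive {y : H} (hy : y ∈ C) (hmin : IsMinOn Ψ C y) : Φ y = r :=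
    hy.2.eq_of_not_lt fun hlt => hlt.not_gt <| hcrit y hy.1 <|
      isMinOn_of_isMinOn_sublevel_of_lt hΨ (hΦc y hy.1) hy.1 hlt hmin
  obtain ⟨x, hx, hxmin⟩ := exists_isMinOn_of_convexOn_of_isBounded hne
    (isClosed_sep_le_of_lowerSemicontinuousOn hs hΦc.lowerSemicontinuousOn r) hbdd
    (hΨ.subset hCs hC) (hΨc.mono hCs)
  have hxr := hactive hx hxmin
  refine ⟨x, ⟨⟨hx.1, hxr⟩, hxmin.on_subset fun v hv => ⟨hv.1, hv.2.le⟩⟩, ?_⟩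
  rintro y ⟨⟨hy, hyr⟩, hymin⟩
  by_contra hyx
  set z := (1 / 2 : ℝ) • y + (1 / 2 : ℝ) • x
  have hz : z ∈ C := hC ⟨hy, hyr.le⟩ hx (by norm_num) (by norm_num) (by norm_num)
  have hzr : Φ z < r := by
    have h := hΦ.2 hy hx.1 hyx one_half_pos one_half_pos (add_halves 1)
    rwa [hyr, hxr, ← add_smul, add_halves, one_smul] at h
  have hzmin : IsMinOn Ψ C z := by
    have hyΨ : Ψ y ≤ Ψ x := hymin ⟨hx.1, hxr⟩
    have hzΨ : Ψ z ≤ Ψ x := (hΨ.convex_le (Ψ x) ⟨hy, hyΨ⟩ ⟨hx.1, le_rfl⟩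
      one_half_pos.le one_half_pos.le (add_halves 1)).2
    exact fun v hv => hzΨ.trans (hxmin hv)
  exact hzr.ne (hactive hz hzmin)

end LevelSets

section Energy

variable {H : Type*} [NormedAddCommGroup H] [InnerProductSpace ℝ H]

/-- The set of global minima over `V` of `u ↦ ‖u‖² + I u + c * J u`. The sets `S` and `S₁` of the
theorem are those of `J` and of `-J`, with `c = (2 - ν) / L`. -/
def penalizedMinimizers (V : Submodule ℝ H) (I J : H → ℝ) (c : ℝ) : Set H :=
  {u | u ∈ V ∧ ∀ v ∈ V, ‖u‖ ^ 2 + I u + c * J u ≤ ‖v‖ ^ 2 + I v + c * J v}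

theorem strictConvexOn_norm_sq_add_s10 {I : H → ℝ} {ν : ℝ} (hν : ν < 2)
    (hI : ConvexOn ℝ univ fun u => I u + ν / 2 * ‖u‖ ^ 2) :
    StrictConvexOn ℝ univ fun u => ‖u‖ ^ 2 + I u := by
  have hstrong : StrongConvexOn univ (2 - ν) fun u => ‖u‖ ^ 2 + I u :=
    strongConvexOn_iff_convex.2 (hI.congr fun u _ => by ring)
  exact hstrong.strictConvexOn (sub_pos.2 hν)

theorem convexOn_norm_sq_add_add_mul {I J : H → ℝ} {ν L : ℝ} (hν : ν ≤ 2) (hL : 0 < L)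
    (hI : ConvexOn ℝ univ fun u => I u + ν / 2 * ‖u‖ ^ 2)
    (hJ : ConvexOn ℝ univ fun u => J u + L / 2 * ‖u‖ ^ 2) :
    ConvexOn ℝ univ fun u => ‖u‖ ^ 2 + I u + (2 - ν) / L * J u := by
  refine (hI.add (hJ.smul (div_nonneg (sub_nonneg.2 hν) hL.le))).congr fun u _ => ?_
  simp only [Pi.add_apply, smul_eq_mul]
  field_simp
  ring

variable [CompleteSpace H] {V : Submodule ℝ H} {I J : H → ℝ} {I' J' : H → H}

theorem zero_lt_iInf_penalizedMinimizers {c : ℝ} {v₀ : H}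
    (hIgrad : ∀ u, HasGradientAt I (I' u) u) (hJgrad : ∀ u, HasGradientAt J (J' u) u)
    (hI' : ContinuousAt I' 0) (hJ' : ContinuousAt J' 0) (hInonneg : ∀ u, 0 ≤ I u) (hI0 : I 0 = 0)
    (hc : c ≠ 0) (hv₀V : v₀ ∈ V) (hv₀ : ⟪J' 0, v₀⟫ ≠ 0) :
    (0 : EReal) < ⨅ u ∈ penalizedMinimizers V I J c, ((‖u‖ ^ 2 + I u : ℝ) : EReal) := by
  have hgrad (u : H) : HasGradientAt (fun v => ‖v‖ ^ 2 + I v + c * J v)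
      ((2 : ℝ) • u + I' u + c • J' u) u :=
    hasGradientAt_add (hasGradientAt_add (hasGradientAt_norm_sq u) (hIgrad u))
      (hasGradientAt_const_mul c (hJgrad u))
  have hI'0 : ⟪I' 0, v₀⟫ = 0 := inner_gradient_eq_zero_of_isMinOn (hIgrad 0) V.zero_mem
    (fun u _ => hI0.trans_le (hInonneg u)) hv₀V
  obtain ⟨ε, hε, hdist⟩ := exists_pos_forall_isMinOn_le_dist hgrad (w := 0) (by fun_prop) hv₀V
    (by simpa [inner_add_left, real_inner_smul_left, hI'0] using ⟨hc, hv₀⟩)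
  refine (EReal.coe_pos.2 (pow_pos hε 2)).trans_le
    (le_iInf₂ fun u hu => EReal.coe_le_coe_iff.2 ?_)
  have hnorm : ε ≤ ‖u‖ := by simpa using hdist u hu.1 hu.2
  calc ε ^ 2 ≤ ‖u‖ ^ 2 := by gcongr
    _ ≤ ‖u‖ ^ 2 + I u := le_add_of_nonneg_right (hInonneg u)

theorem existsUnique_isMinOn_norm_sq_add_level {ν L r : ℝ} (hV : IsClosed (V : Set H))
    (hν : ν < 2) (hL : 0 < L)
    (hIgrad : ∀ u, HasGradientAt I (I' u) u) (hJgrad : ∀ u, HasGradientAt J (J' u) u)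
    (hIlip : ∀ u v, ‖I' u - I' v‖ ≤ ν * ‖u - v‖) (hJlip : ∀ u v, ‖J' u - J' v‖ ≤ L * ‖u - v‖)
    (hInonneg : ∀ u, 0 ≤ I u) (hI0 : I 0 ≤ r)
    (hr : (r : EReal) <
      ⨅ u ∈ penalizedMinimizers V I J ((2 - ν) / L), ((‖u‖ ^ 2 + I u : ℝ) : EReal)) :
    ∃! u, (u ∈ V ∧ ‖u‖ ^ 2 + I u = r) ∧ ∀ v, v ∈ V ∧ ‖v‖ ^ 2 + I v = r → J u ≤ J v := by
  have hI := convexOn_add_norm_sq_of_lipschitz_gradient hIgrad hIlip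
  have hJ := convexOn_add_norm_sq_of_lipschitz_gradient hJgrad hJlip
  have hIc : Continuous I := continuous_iff_continuousAt.2 fun u => (hIgrad u).continuousAt
  have hJc : Continuous J := continuous_iff_continuousAt.2 fun u => (hJgrad u).continuousAt
  have hc : 0 < (2 - ν) / L := div_pos (sub_pos.2 hν) hL
  have hbdd : Bornology.IsBounded {u ∈ (V : Set H) | ‖u‖ ^ 2 + I u ≤ r} :=
    isBounded_iff_forall_norm_le.2
      ⟨√r, fun u hu => Real.le_sqrt_of_sq_le (by linarith [hu.2, hInonneg u])⟩
  have hΨ := existsUnique_isMinOn_level_of_convexOn hV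
    ((strictConvexOn_norm_sq_add_s10 hν hI).subset (subset_univ _) V.convex) (by fun_prop)
    ((convexOn_norm_sq_add_add_mul hν.le hL hI hJ).subset (subset_univ _) V.convex)
    (ContinuousOn.lowerSemicontinuousOn (by fun_prop))
    ⟨0, V.zero_mem, by simpa using hI0⟩ hbdd
    fun u hu hmin => EReal.coe_lt_coe_iff.1 (hr.trans_le (iInf₂_le u ⟨hu, hmin⟩))
  refine (existsUnique_congr fun u => and_congr_right fun hu => ?_).1 hΨ
  refine forall₂_congr fun v hv => ?_
  change ‖u‖ ^ 2 + I u + _ ≤ ‖v‖ ^ 2 + I v + _ ↔ _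
  rw [hu.2, hv.2, add_le_add_iff_left, mul_le_mul_iff_right₀ hc]

end Energy

theorem abstract_theorem_two
    {H : Type*} [NormedAddCommGroup H] [InnerProductSpace ℝ H] [CompleteSpace H]
    (V : Submodule ℝ H) (hV : IsClosed (V : Set H))
    (I J : H → ℝ) (I' J' : H → H) (ν L : ℝ)
    (hν₀ : 0 ≤ ν) (hν₂ : ν < 2) (hL : 0 < L)
    (hIgrad : ∀ u, HasGradientAt I (I' u) u)
    (hJgrad : ∀ u, HasGradientAt J (J' u) u)
    (hIlip : ∀ u v, ‖I' u - I' v‖ ≤ ν * ‖u - v‖)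
    (hJlip : ∀ u v, ‖J' u - J' v‖ ≤ L * ‖u - v‖)
    (hInonneg : ∀ u, 0 ≤ I u) (hI0 : I 0 = 0)
    (v₀ : H) (hv₀V : v₀ ∈ V) (hv₀ : ⟪J' 0, v₀⟫ ≠ 0)
    (S S₁ : Set H)
    (hS : S = {u : H | u ∈ V ∧ ∀ v ∈ V,
      ‖u‖ ^ 2 + I u + ((2 - ν) / L) * J u ≤ ‖v‖ ^ 2 + I v + ((2 - ν) / L) * J v})
    (hS₁ : S₁ = {u : H | u ∈ V ∧ ∀ v ∈ V,
      ‖u‖ ^ 2 + I u - ((2 - ν) / L) * J u ≤ ‖v‖ ^ 2 + I v - ((2 - ν) / L) * J v})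
    (δ₁ : EReal)
    (hδ₁ : δ₁ = min (⨅ u ∈ S, ((‖u‖ ^ 2 + I u : ℝ) : EReal))
                    (⨅ u ∈ S₁, ((‖u‖ ^ 2 + I u : ℝ) : EReal))) :
    (0 : EReal) < δ₁ ∧
    ∀ r : ℝ, 0 < r → (r : EReal) < δ₁ →
      (∃! ustar : H, (ustar ∈ V ∧ ‖ustar‖ ^ 2 + I ustar = r) ∧
        ∀ u, u ∈ V ∧ ‖u‖ ^ 2 + I u = r → J ustar ≤ J u) ∧
      (∃! wstar : H, (wstar ∈ V ∧ ‖wstar‖ ^ 2 + I wstar = r) ∧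
        ∀ u, u ∈ V ∧ ‖u‖ ^ 2 + I u = r → J u ≤ J wstar) := by
  have hc : (2 - ν) / L ≠ 0 := (div_pos (sub_pos.2 hν₂) hL).ne'
  have hI'c : Continuous I' :=
    (LipschitzWith.of_dist_le' fun u v => by simpa only [dist_eq_norm] using hIlip u v).continuous
  have hJ'c : Continuous J' :=
    (LipschitzWith.of_dist_le' fun u v => by simpa only [dist_eq_norm] using hJlip u v).continuous
  have hJgrad_neg (u : H) := hasGradientAt_neg (hJgrad u)
  have hJlip_neg (u v : H) : ‖-J' u - -J' v‖ ≤ L * ‖u - v‖ := by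
    rw [neg_sub_neg, norm_sub_rev]
    exact hJlip u v
  replace hS : S = penalizedMinimizers V I J ((2 - ν) / L) := hS
  replace hS₁ : S₁ = penalizedMinimizers V I (fun u => -J u) ((2 - ν) / L) := by
    simpa only [penalizedMinimizers, mul_neg, ← sub_eq_add_neg] using hS₁
  rw [hS, hS₁] at hδ₁
  refine hδ₁ ▸ ⟨lt_min ?_ ?_, fun r hr hrδ => ⟨?_, ?_⟩⟩
  · exact zero_lt_iInf_penalizedMinimizers hIgrad hJgrad hI'c.continuousAt hJ'c.continuousAt
      hInonneg hI0 hc hv₀V hv₀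
  · exact zero_lt_iInf_penalizedMinimizers hIgrad hJgrad_neg hI'c.continuousAt
      hJ'c.neg.continuousAt hInonneg hI0 hc hv₀V (by simpa [inner_neg_left] using hv₀)
  · exact existsUnique_isMinOn_norm_sq_add_level hV hν₂ hL hIgrad hJgrad hIlip hJlip hInonneg
      (hI0.trans_le hr.le) (hrδ.trans_le (min_le_left _ _))
  · simpa only [neg_le_neg_iff] using existsUnique_isMinOn_norm_sq_add_level hV hν₂ hL hIgrad
      hJgrad_neg hIlip hJlip_neg hInonneg (hI0.trans_le hr.le) (hrδ.trans_le (min_le_right _ _))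
end
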